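/- arXiv:0711.3258 — 2 statements merged into one kernel-verified Lean document; each statement's English description precedes it below -/
import Mathlib

section
/- (Lemma 3.5, part 3: symbol estimates for the escape function.) With χ, the backward solution (r(t),θ(t),ρ(t),ω(t)) and the function φ(t,r,θ,ρ,ω) = χ(|r−r(t)|/(5δ₀|t+T₀|)) · χ(|θ−θ(t)|/(δ₀−C|t+T₀|^{-μ})) · χ(|ρ−ρ(t)|/(δ₀−C|t+T₀|^{-1-μ})) · χ(|ω−ω(t)|/(δ₀−C|t+T₀|^{-μ})) as in Lemma 3.5 (δ₀ ∈ (δ'/2,δ'), C large, T₀ < 0 sufficiently negative), for all k, l ∈ ℕ, multi-indices α, β, and n ∈ ℕ there exists a constant C_{kαlβn} such that |∂_r^k ∂_θ^α ∂_ρ^l ∂_ω^β ∂_t^n φ(t,r,θ,ρ,ω)| ≤ C_{kαlβn} (1+|t|)^{-n-k} for all t ≤ 0 and all (r,θ,ρ,ω) ∈ (1,∞)×U×ℝ×ℝ^{n-1}. -/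
open Real Set Filter Topology

namespace Scattering

/-- The Euclidean norm of a vector in `Fin m → ℝ`. -/
noncomputable def eNorm {m : ℕ} (v : Fin m → ℝ) : ℝ := Real.sqrt (∑ j, v j ^ 2)

/-- Partial derivative in the radial variable of a function of `(r, θ)`. -/
noncomputable def pderivR {m : ℕ} (f : ℝ → (Fin m → ℝ) → ℝ) : ℝ → (Fin m → ℝ) → ℝ :=
  fun r θ => deriv (fun s => f s θ) r

/-- Partial derivative in the `j`-th angular variable of a function of `(r, θ)`. -/
noncomputable def pderivTheta {m : ℕ} (j : Fin m) (f : ℝ → (Fin m → ℝ) → ℝ) :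
    ℝ → (Fin m → ℝ) → ℝ :=
  fun r θ => fderiv ℝ (f r) θ (Pi.single j 1)

/-- Iterated angular derivatives `∂_θ^α` for a multi-index `α` (a list of directions). -/
noncomputable def thetaDerivs {m : ℕ} (α : List (Fin m)) (f : ℝ → (Fin m → ℝ) → ℝ) :
    ℝ → (Fin m → ℝ) → ℝ :=
  α.foldr pderivTheta f

/-- `DecayOn f ν S K` : for all `k, α` there is `C > 0` with
`|∂_r^k ∂_θ^α f(r,θ)| ≤ C r^{-ν-k}` for `r ∈ (S,∞)`, `θ ∈ K`. -/
def DecayOn {m : ℕ} (f : ℝ → (Fin m → ℝ) → ℝ) (ν S : ℝ) (K : Set (Fin m → ℝ)) : Prop :=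
  ∀ (k : ℕ) (α : List (Fin m)), ∃ C > 0, ∀ r ∈ Ioi S, ∀ θ ∈ K,
    |(pderivR (m := m))^[k] (thetaDerivs α f) r θ| ≤ C * r ^ (-ν - (k : ℝ))

/-- The classical kinetic energy function
`p(r,θ,ρ,ω) = ρ² + r⁻²Σ h^{jk} ω_j ω_k + a₀ ρ² + r⁻¹ Σ a₁^j ρ ω_j + r⁻² Σ a₂^{jk} ω_j ω_k`. -/
noncomputable def energy {m : ℕ} (hM : (Fin m → ℝ) → Matrix (Fin m) (Fin m) ℝ)
    (a0 : ℝ → (Fin m → ℝ) → ℝ) (a1 : ℝ → (Fin m → ℝ) → Fin m → ℝ)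
    (a2 : ℝ → (Fin m → ℝ) → Matrix (Fin m) (Fin m) ℝ) :
    ℝ → (Fin m → ℝ) → ℝ → (Fin m → ℝ) → ℝ :=
  fun r θ ρ ω =>
    ρ ^ 2 + (∑ j, ∑ k, hM θ j k * ω j * ω k) / r ^ 2 + a0 r θ * ρ ^ 2
      + (∑ j, a1 r θ j * ρ * ω j) / r + (∑ j, ∑ k, a2 r θ j k * ω j * ω k) / r ^ 2

section PhaseDerivs

variable {m : ℕ} (p : ℝ → (Fin m → ℝ) → ℝ → (Fin m → ℝ) → ℝ)

/-- `∂p/∂r`. -/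
noncomputable def pdR (r : ℝ) (θ : Fin m → ℝ) (ρ : ℝ) (ω : Fin m → ℝ) : ℝ :=
  deriv (fun s => p s θ ρ ω) r

/-- `∂p/∂θ_j`. -/
noncomputable def pdTheta (j : Fin m) (r : ℝ) (θ : Fin m → ℝ) (ρ : ℝ) (ω : Fin m → ℝ) : ℝ :=
  fderiv ℝ (fun θ' => p r θ' ρ ω) θ (Pi.single j 1)

/-- `∂p/∂ρ`. -/
noncomputable def pdRho (r : ℝ) (θ : Fin m → ℝ) (ρ : ℝ) (ω : Fin m → ℝ) : ℝ :=
  deriv (fun s => p r θ s ω) ρ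

/-- `∂p/∂ω_j`. -/
noncomputable def pdOmega (j : Fin m) (r : ℝ) (θ : Fin m → ℝ) (ρ : ℝ) (ω : Fin m → ℝ) : ℝ :=
  fderiv ℝ (fun ω' => p r θ ρ ω') ω (Pi.single j 1)

/-- `(r,θ,ρ,ω)` solves the Hamiltonian system
`ṙ = ∂p/∂ρ, θ̇ = ∂p/∂ω, ρ̇ = -∂p/∂r, ω̇ = -∂p/∂θ` on the set `I` of times. -/
def IsHamSolOn (r : ℝ → ℝ) (θ : ℝ → Fin m → ℝ) (ρ : ℝ → ℝ) (ω : ℝ → Fin m → ℝ)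
    (I : Set ℝ) : Prop :=
  ∀ t ∈ I,
    HasDerivAt r (pdRho p (r t) (θ t) (ρ t) (ω t)) t ∧
    (∀ j, HasDerivAt (fun s => θ s j) (pdOmega p j (r t) (θ t) (ρ t) (ω t)) t) ∧
    HasDerivAt ρ (-pdR p (r t) (θ t) (ρ t) (ω t)) t ∧
    (∀ j, HasDerivAt (fun s => ω s j) (-pdTheta p j (r t) (θ t) (ρ t) (ω t)) t)

/-- The interaction-picture (time-dependent) Hamiltonian `K(t,R,θ,ρ,ω) = ρ² - p(R+2tρ,θ,ρ,ω)`. -/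
noncomputable def Kint (t R : ℝ) (θ : Fin m → ℝ) (ρ : ℝ) (ω : Fin m → ℝ) : ℝ :=
  ρ ^ 2 - p (R + 2 * t * ρ) θ ρ ω

/-- `∂K/∂R`. -/
noncomputable def KdR (t R : ℝ) (θ : Fin m → ℝ) (ρ : ℝ) (ω : Fin m → ℝ) : ℝ :=
  deriv (fun x => Kint p t x θ ρ ω) R

/-- `∂K/∂θ_j`. -/
noncomputable def KdTheta (j : Fin m) (t R : ℝ) (θ : Fin m → ℝ) (ρ : ℝ) (ω : Fin m → ℝ) : ℝ :=
  fderiv ℝ (fun θ' => Kint p t R θ' ρ ω) θ (Pi.single j 1)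

/-- `∂K/∂ρ`. -/
noncomputable def KdRho (t R : ℝ) (θ : Fin m → ℝ) (ρ : ℝ) (ω : Fin m → ℝ) : ℝ :=
  deriv (fun x => Kint p t R θ x ω) ρ

/-- `∂K/∂ω_j`. -/
noncomputable def KdOmega (j : Fin m) (t R : ℝ) (θ : Fin m → ℝ) (ρ : ℝ) (ω : Fin m → ℝ) : ℝ :=
  fderiv ℝ (fun ω' => Kint p t R θ ρ ω') ω (Pi.single j 1)

end PhaseDerivs

/-- The phase space `ℝ × ℝ^m × ℝ × ℝ^m` with coordinates `(R, θ, ρ, ω)`. -/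
abbrev Phase (m : ℕ) : Type := ℝ × (Fin m → ℝ) × ℝ × (Fin m → ℝ)

/-- A curve `f = (R,θ,ρ,ω)` solves the interaction-picture Hamiltonian system
`Ṙ = ∂K/∂ρ, θ̇ = ∂K/∂ω, ρ̇ = -∂K/∂R, ω̇ = -∂K/∂θ` on the set `I` of times. -/
def IsIntSolOn {m : ℕ} (p : ℝ → (Fin m → ℝ) → ℝ → (Fin m → ℝ) → ℝ)
    (f : ℝ → Phase m) (I : Set ℝ) : Prop :=
  ∀ t ∈ I,
    HasDerivAt (fun s => (f s).1) (KdRho p t (f t).1 (f t).2.1 (f t).2.2.1 (f t).2.2.2) t ∧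
    (∀ j, HasDerivAt (fun s => (f s).2.1 j)
      (KdOmega p j t (f t).1 (f t).2.1 (f t).2.2.1 (f t).2.2.2) t) ∧
    HasDerivAt (fun s => (f s).2.2.1)
      (-(KdR p t (f t).1 (f t).2.1 (f t).2.2.1 (f t).2.2.2)) t ∧
    (∀ j, HasDerivAt (fun s => (f s).2.2.2 j)
      (-(KdTheta p j t (f t).1 (f t).2.1 (f t).2.2.1 (f t).2.2.2)) t)

/-- The data of a scattering metric of short-range type on the end `(1,∞) × U`:
the boundary metric `h` (smooth, symmetric, positive definite) and the coefficients
`a₀, a₁, a₂` of the kinetic energy, smooth on `(1,∞) × U` with the short-range decay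
`|∂_r^k ∂_θ^α a₀| ≤ C r^{-1-μ-k}`, `|∂_r^k ∂_θ^α a₁| ≤ C r^{-μ-k}`,
`|∂_r^k ∂_θ^α a₂| ≤ C r^{-μ-k}` on `(1,∞) × K` for every compact `K ⊆ U`. -/
structure Coeffs (m : ℕ) (μ : ℝ) (U : Set (Fin m → ℝ)) where
  hM : (Fin m → ℝ) → Matrix (Fin m) (Fin m) ℝ
  a0 : ℝ → (Fin m → ℝ) → ℝ
  a1 : ℝ → (Fin m → ℝ) → Fin m → ℝ
  a2 : ℝ → (Fin m → ℝ) → Matrix (Fin m) (Fin m) ℝ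
  hM_smooth : ∀ j k, ContDiffOn ℝ (⊤ : ℕ∞) (fun θ => hM θ j k) U
  hM_symm : ∀ θ ∈ U, (hM θ).IsSymm
  hM_posdef : ∀ θ ∈ U, (hM θ).PosDef
  a0_smooth : ContDiffOn ℝ (⊤ : ℕ∞) (fun z : ℝ × (Fin m → ℝ) => a0 z.1 z.2) (Ioi (1:ℝ) ×ˢ U)
  a1_smooth : ∀ j, ContDiffOn ℝ (⊤ : ℕ∞) (fun z : ℝ × (Fin m → ℝ) => a1 z.1 z.2 j) (Ioi (1:ℝ) ×ˢ U)
  a2_smooth : ∀ j k, ContDiffOn ℝ (⊤ : ℕ∞) (fun z : ℝ × (Fin m → ℝ) => a2 z.1 z.2 j k) (Ioi (1:ℝ) ×ˢ U)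
  a2_symm : ∀ r θ j k, a2 r θ j k = a2 r θ k j
  a0_decay : ∀ K : Set (Fin m → ℝ), IsCompact K → K ⊆ U → DecayOn a0 (1 + μ) 1 K
  a1_decay : ∀ K : Set (Fin m → ℝ), IsCompact K → K ⊆ U →
    ∀ j, DecayOn (fun r θ => a1 r θ j) μ 1 K
  a2_decay : ∀ K : Set (Fin m → ℝ), IsCompact K → K ⊆ U →
    ∀ j k, DecayOn (fun r θ => a2 r θ j k) μ 1 K

/-- The kinetic energy function associated to the data `c`. -/
noncomputable def Coeffs.p {m : ℕ} {μ : ℝ} {U : Set (Fin m → ℝ)} (c : Coeffs m μ U) :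
    ℝ → (Fin m → ℝ) → ℝ → (Fin m → ℝ) → ℝ :=
  energy c.hM c.a0 c.a1 c.a2


/-- Functions of the five phase-space-time variables `(t, r, θ, ρ, ω)`. -/
abbrev F5 (m : ℕ) : Type := ℝ → ℝ → (Fin m → ℝ) → ℝ → (Fin m → ℝ) → ℝ

/-- `∂_t`. -/
noncomputable def DT {m : ℕ} (φ : F5 m) : F5 m :=
  fun t r θ ρ ω => deriv (fun s => φ s r θ ρ ω) t

/-- `∂_r`. -/
noncomputable def DR {m : ℕ} (φ : F5 m) : F5 m :=
  fun t r θ ρ ω => deriv (fun x => φ t x θ ρ ω) r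

/-- `∂_{θ_j}`. -/
noncomputable def DTheta {m : ℕ} (j : Fin m) (φ : F5 m) : F5 m :=
  fun t r θ ρ ω => fderiv ℝ (fun y => φ t r y ρ ω) θ (Pi.single j 1)

/-- `∂_ρ`. -/
noncomputable def DRho {m : ℕ} (φ : F5 m) : F5 m :=
  fun t r θ ρ ω => deriv (fun x => φ t r θ x ω) ρ

/-- `∂_{ω_j}`. -/
noncomputable def DOmega {m : ℕ} (j : Fin m) (φ : F5 m) : F5 m :=
  fun t r θ ρ ω => fderiv ℝ (fun y => φ t r θ ρ y) ω (Pi.single j 1)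

/-- The mixed derivative `∂_r^k ∂_θ^α ∂_ρ^l ∂_ω^β ∂_t^n φ`. -/
noncomputable def mixedDeriv {m : ℕ} (k : ℕ) (α : List (Fin m)) (l : ℕ)
    (β : List (Fin m)) (n' : ℕ) (φ : F5 m) : F5 m :=
  (DR (m := m))^[k] (α.foldr DTheta ((DRho (m := m))^[l] (β.foldr DOmega ((DT (m := m))^[n'] φ))))

/-- The escape function of Lemma 3.5. -/
noncomputable def escapeFn {m : ℕ} (μ : ℝ) (χ : ℝ → ℝ) (δ₀ C T₀ : ℝ)
    (rS : ℝ → ℝ) (θS : ℝ → Fin m → ℝ) (ρS : ℝ → ℝ) (ωS : ℝ → Fin m → ℝ) : F5 m :=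
  fun t r θ ρ ω =>
    χ (|r - rS t| / (5 * δ₀ * |t + T₀|)) *
      χ (eNorm (θ - θS t) / (δ₀ - C * |t + T₀| ^ (-μ))) *
      χ (|ρ - ρS t| / (δ₀ - C * |t + T₀| ^ (-(1:ℝ) - μ))) *
      χ (eNorm (ω - ωS t) / (δ₀ - C * |t + T₀| ^ (-μ)))

theorem clm_pi_apply {n : ℕ} (L : (Fin n → ℝ) →L[ℝ] ℝ) (v : Fin n → ℝ) :
    L v = ∑ i, v i * L (Pi.single i 1) := by
  conv_lhs => rw [pi_eq_sum_univ' v]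
  simp

section GenSym

variable {E : Type*} [NormedAddCommGroup E] [NormedSpace ℝ E] {ι : Type*}

/-- Symbol classes with `N` derivatives controlled. -/
def Sym (e : ι → E) (w : ι → ℝ) (τ : E → ℝ) (S : Set E) : ℕ → ℝ → (E → ℝ) → Prop
  | 0, ν, G => ∃ C, ∀ z ∈ S, |G z| ≤ C * τ z ^ ν
  | N + 1, ν, G => (∃ C, ∀ z ∈ S, |G z| ≤ C * τ z ^ ν) ∧
      ∀ d, ∃ G' : E → ℝ, (∀ z ∈ S, HasDerivAt (fun s : ℝ => G (z + s • e d)) (G' z) 0) ∧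
        Sym e w τ S N (ν - w d) G'

variable {e : ι → E} {w : ι → ℝ} {τ : E → ℝ} {S : Set E}

theorem Sym.bound {N : ℕ} {ν : ℝ} {G : E → ℝ} (h : Sym e w τ S N ν G) :
    ∃ C, ∀ z ∈ S, |G z| ≤ C * τ z ^ ν := by
  cases N with
  | zero => exact h
  | succ N => exact h.1

theorem Sym.pred {N : ℕ} {ν : ℝ} {G : E → ℝ} (h : Sym e w τ S (N + 1) ν G) :
    Sym e w τ S N ν G := by
  induction N generalizing ν G with
  | zero => exact h.1
  | succ N ih =>
    refine ⟨h.1, fun d => ?_⟩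
    obtain ⟨G', h1, h2⟩ := h.2 d
    exact ⟨G', h1, ih h2⟩

theorem Sym.mono (hτ : ∀ z ∈ S, 1 ≤ τ z) {N : ℕ} {ν ν' : ℝ} {G : E → ℝ}
    (h : Sym e w τ S N ν G) (hν : ν ≤ ν') : Sym e w τ S N ν' G := by
  have key : ∀ {ν ν' : ℝ} {G : E → ℝ}, ν ≤ ν' → (∃ C, ∀ z ∈ S, |G z| ≤ C * τ z ^ ν) →
      (∃ C, ∀ z ∈ S, |G z| ≤ C * τ z ^ ν') := by
    rintro ν ν' G hν ⟨C, hC⟩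
    refine ⟨|C|, fun z hz => (hC z hz).trans ?_⟩
    have h0 : 0 ≤ τ z ^ ν := Real.rpow_nonneg (by linarith [hτ z hz]) _
    have h1 : τ z ^ ν ≤ τ z ^ ν' := Real.rpow_le_rpow_of_exponent_le (hτ z hz) hν
    calc C * τ z ^ ν ≤ |C| * τ z ^ ν := mul_le_mul_of_nonneg_right (le_abs_self C) h0
      _ ≤ _ := mul_le_mul_of_nonneg_left h1 (abs_nonneg _)
  induction N generalizing ν ν' G with
  | zero => exact key hν h
  | succ N ih =>
    refine ⟨key hν h.1, fun d => ?_⟩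
    obtain ⟨G', h1, h2⟩ := h.2 d
    exact ⟨G', h1, ih h2 (by linarith)⟩

theorem Sym.zero {N : ℕ} {ν : ℝ} : Sym e w τ S N ν (fun _ => 0) := by
  induction N generalizing ν with
  | zero => exact ⟨0, by simp⟩
  | succ N ih =>
    exact ⟨⟨0, by simp⟩, fun d => ⟨fun _ => 0, fun z _ => hasDerivAt_const _ _, ih⟩⟩

theorem Sym.const {N : ℕ} (c : ℝ) : Sym e w τ S N 0 (fun _ => c) := by
  cases N with
  | zero => exact ⟨|c|, by simp⟩
  | succ N =>
    exact ⟨⟨|c|, by simp⟩, fun d => ⟨fun _ => 0, fun z _ => hasDerivAt_const _ _, Sym.zero⟩⟩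

theorem Sym.add {N : ℕ} {ν : ℝ} {F G : E → ℝ}
    (hF : Sym e w τ S N ν F) (hG : Sym e w τ S N ν G) :
    Sym e w τ S N ν (fun z => F z + G z) := by
  have key : ∀ {ν : ℝ} {F G : E → ℝ}, (∃ C, ∀ z ∈ S, |F z| ≤ C * τ z ^ ν) →
      (∃ C, ∀ z ∈ S, |G z| ≤ C * τ z ^ ν) → ∃ C, ∀ z ∈ S, |F z + G z| ≤ C * τ z ^ ν := by
    rintro ν F G ⟨C, hC⟩ ⟨D, hD⟩
    refine ⟨C + D, fun z hz => ?_⟩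
    rw [add_mul]
    exact (abs_add_le _ _).trans (add_le_add (hC z hz) (hD z hz))
  induction N generalizing ν F G with
  | zero => exact key hF hG
  | succ N ih =>
    refine ⟨key hF.1 hG.1, fun d => ?_⟩
    obtain ⟨F', h1, h2⟩ := hF.2 d
    obtain ⟨G', h3, h4⟩ := hG.2 d
    exact ⟨_, fun z hz => (h1 z hz).add (h3 z hz), ih h2 h4⟩

theorem Sym.sum {κ : Type*} (s : Finset κ) {N : ℕ} {ν : ℝ} {F : κ → E → ℝ}
    (hF : ∀ i ∈ s, Sym e w τ S N ν (F i)) :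
    Sym e w τ S N ν (fun z => ∑ i ∈ s, F i z) := by
  classical
  induction s using Finset.induction_on with
  | empty => simpa using Sym.zero
  | insert a s ha ih =>
    simp only [Finset.sum_insert ha]
    exact (hF a (by simp)).add (ih fun i hi => hF i (by simp [hi]))

theorem Sym.mul (hτ : ∀ z ∈ S, 1 ≤ τ z) {N : ℕ} {a b c : ℝ} {F G : E → ℝ}
    (hF : Sym e w τ S N a F) (hG : Sym e w τ S N b G) (hc : a + b ≤ c) :
    Sym e w τ S N c (fun z => F z * G z) := by
  refine Sym.mono hτ (ν := a + b) ?_ hc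
  clear hc
  have key : ∀ {a b : ℝ} {F G : E → ℝ}, (∃ C, ∀ z ∈ S, |F z| ≤ C * τ z ^ a) →
      (∃ C, ∀ z ∈ S, |G z| ≤ C * τ z ^ b) → ∃ C, ∀ z ∈ S, |F z * G z| ≤ C * τ z ^ (a + b) := by
    rintro a b F G ⟨C, hC⟩ ⟨D, hD⟩
    refine ⟨C * D, fun z hz => ?_⟩
    have hp : 0 < τ z := by linarith [hτ z hz]
    rw [abs_mul, Real.rpow_add hp]
    calc |F z| * |G z| ≤ (C * τ z ^ a) * (D * τ z ^ b) :=
          mul_le_mul (hC z hz) (hD z hz) (abs_nonneg _) ((abs_nonneg _).trans (hC z hz))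
      _ = _ := by ring
  induction N generalizing a b F G with
  | zero => exact key hF hG
  | succ N ih =>
    refine ⟨key hF.1 hG.1, fun d => ?_⟩
    obtain ⟨F', h1, h2⟩ := hF.2 d
    obtain ⟨G', h3, h4⟩ := hG.2 d
    refine ⟨fun z => F' z * G z + F z * G' z, fun z hz => ?_, ?_⟩
    · simpa using (h1 z hz).fun_mul (h3 z hz)
    · refine Sym.add ?_ ?_
      · exact (ih h2 hG.pred).mono hτ (by linarith)
      · exact (ih hF.pred h4).mono hτ (by linarith)

theorem Sym.neg (hτ : ∀ z ∈ S, 1 ≤ τ z) {N : ℕ} {a : ℝ} {F : E → ℝ}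
    (hF : Sym e w τ S N a F) : Sym e w τ S N a (fun z => - F z) := by
  have := (Sym.const (e := e) (w := w) (τ := τ) (S := S) (N := N) (-1)).mul hτ hF
    (c := a) (by simp)
  simpa using this

theorem Sym.comp (hτ : ∀ z ∈ S, 1 ≤ τ z) {n : ℕ} (V : E → Fin n → ℝ)
    (hV : ∀ d, ∃ (A : Fin n → E → ℝ) (B : E → ℝ), (∀ N i, Sym e w τ S N (- w d) (A i)) ∧
      (∀ N, Sym e w τ S N (- w d) B) ∧
      ∀ z ∈ S, ∀ i, HasDerivAt (fun s : ℝ => V (z + s • e d) i) (A i z + B z * V z i) 0)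
    (N : ℕ) (Ψ : (Fin n → ℝ) → ℝ) (hΨ : ContDiff ℝ (⊤ : ℕ∞) Ψ) (hc : HasCompactSupport Ψ) :
    Sym e w τ S N 0 (fun z => Ψ (V z)) := by
  have key : ∀ Ψ : (Fin n → ℝ) → ℝ, ContDiff ℝ (⊤ : ℕ∞) Ψ → HasCompactSupport Ψ →
      ∃ C, ∀ z ∈ S, |Ψ (V z)| ≤ C * τ z ^ (0:ℝ) := by
    intro Ψ hΨ hc
    obtain ⟨C, hC⟩ := hΨ.continuous.bounded_above_of_compact_support hc
    exact ⟨C, fun z _ => by simpa using hC (V z)⟩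
  induction N generalizing Ψ with
  | zero => exact key Ψ hΨ hc
  | succ N ih =>
    refine ⟨key Ψ hΨ hc, fun d => ?_⟩
    obtain ⟨A, B, hA, hB, hd⟩ := hV d
    have hdΨ : ∀ i, ContDiff ℝ (⊤ : ℕ∞) (fun y => fderiv ℝ Ψ y (Pi.single i 1)) := fun i =>
      (hΨ.fderiv_right (m := (⊤ : ℕ∞)) (by simp)).clm_apply contDiff_const
    have hcΨ : ∀ i, HasCompactSupport (fun y => fderiv ℝ Ψ y (Pi.single i 1)) := fun i =>
      hc.fderiv_apply ℝ _
    refine ⟨fun z => ∑ i, (fderiv ℝ Ψ (V z) (Pi.single i 1) * A i z +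
      (V z i * fderiv ℝ Ψ (V z) (Pi.single i 1)) * B z), fun z hz => ?_, ?_⟩
    · have h1 : HasDerivAt (fun s : ℝ => V (z + s • e d)) (fun i => A i z + B z * V z i) 0 :=
        hasDerivAt_pi.2 (hd z hz)
      have h2 : HasFDerivAt Ψ (fderiv ℝ Ψ (V z)) (V (z + (0:ℝ) • e d)) := by
        simpa using (hΨ.differentiable (by simp) (V z)).hasFDerivAt
      have h3 := h2.comp_hasDerivAt (0:ℝ) h1
      refine h3.congr_deriv ?_
      rw [clm_pi_apply]
      refine Finset.sum_congr rfl fun i _ => ?_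
      ring
    · refine Sym.sum _ fun i _ => Sym.add ?_ ?_
      · exact (ih _ (hdΨ i) (hcΨ i)).mul hτ (hA N i) (by simp)
      · refine (ih (fun y => y i * fderiv ℝ Ψ y (Pi.single i 1)) ?_ ?_).mul hτ (hB N) (by simp)
        · exact (contDiff_apply ℝ ℝ i).mul (hdΨ i)
        · exact (hcΨ i).mul_left

end GenSym

theorem junk_deriv {g G : ℝ → ℝ} {a G' : ℝ} (h : ∀ s ≤ a, g s = G s ∨ g s = 0)
    (hG : HasDerivAt G G' a) : deriv g a = G' ∨ deriv g a = 0 := by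
  by_cases hg : DifferentiableAt ℝ g a
  · by_contra! hcon
    have h1 := hg.hasDerivAt.eventually_ne (c := 0) hcon.2
    have h2 := (hg.hasDerivAt.sub hG).eventually_ne (c := 0) (sub_ne_zero.2 hcon.1)
    have h3 : ∀ᶠ s in 𝓝[<] a, False := by
      have hle : 𝓝[<] a ≤ 𝓝[≠] a := nhdsWithin_mono _ fun x hx => ne_of_lt hx
      filter_upwards [hle h1, hle h2, self_mem_nhdsWithin] with s h1 h2 hs
      rcases h s (le_of_lt hs) with h | h
      · exact h2 (by simp [h])
      · exact h1 h
    exact h3.exists.elim fun _ h => h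
  · right; exact deriv_zero_of_not_differentiableAt hg

theorem junk_fderiv {n : ℕ} {g G : (Fin n → ℝ) → ℝ} {a v : Fin n → ℝ} {G' : ℝ}
    (h : ∀ y, g y = G y ∨ g y = 0)
    (hG : HasDerivAt (fun s : ℝ => G (a + s • v)) G' 0) :
    fderiv ℝ g a v = G' ∨ fderiv ℝ g a v = 0 := by
  by_cases hg : DifferentiableAt ℝ g a
  · rw [← hg.lineDeriv_eq_fderiv]
    exact junk_deriv (fun s _ => h _) hG
  · right; simp [fderiv_zero_of_not_differentiableAt hg]

theorem eNorm_coord {n : ℕ} (v : Fin n → ℝ) (i : Fin n) : |v i| ≤ eNorm v := by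
  unfold eNorm
  apply Real.abs_le_sqrt
  exact Finset.single_le_sum (f := fun j => v j ^ 2) (fun j _ => sq_nonneg _) (Finset.mem_univ i)

theorem cutoff_smooth (n : ℕ) (χ : ℝ → ℝ) (hχs : ContDiff ℝ (⊤ : ℕ∞) χ)
    (hχ1 : ∀ τ ≤ (1:ℝ), χ τ = 1) :
    ContDiff ℝ (⊤ : ℕ∞) (fun v : Fin n → ℝ => χ (eNorm v)) := by
  have h1 : ContDiff ℝ (⊤ : ℕ∞) (fun q : ℝ => χ (Real.sqrt q)) := by
    rw [contDiff_iff_contDiffAt]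
    intro q
    rcases le_or_gt q (1/2) with hq | hq
    · have : (fun q : ℝ => χ (Real.sqrt q)) =ᶠ[𝓝 q] fun _ => 1 := by
        filter_upwards [Iio_mem_nhds (show q < 1 by linarith)] with x hx
        exact hχ1 _ (Real.sqrt_le_one.2 (le_of_lt hx))
      exact contDiffAt_const.congr_of_eventuallyEq this
    · exact hχs.contDiffAt.comp q (Real.contDiffAt_sqrt (by linarith))
  exact h1.comp (ContDiff.sum fun i _ => (contDiff_apply ℝ ℝ i).pow 2)

theorem cutoff_compact (n : ℕ) (χ : ℝ → ℝ) (hχ0 : ∀ τ ≥ (2:ℝ), χ τ = 0) :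
    HasCompactSupport (fun v : Fin n → ℝ => χ (eNorm v)) := by
  refine HasCompactSupport.of_support_subset_isCompact (isCompact_closedBall (0 : Fin n → ℝ) 2) ?_
  intro v hv
  rw [mem_closedBall_zero_iff, pi_norm_le_iff_of_nonneg (by norm_num)]
  intro i
  by_contra! h
  exact hv (hχ0 _ ((le_of_lt h).trans (eNorm_coord v i)))

section Coef

variable {m : ℕ}

def Smo (U : Set (Fin m → ℝ)) (f : ℝ → (Fin m → ℝ) → ℝ) : Prop :=
  ContDiffOn ℝ (⊤ : ℕ∞) (fun z : ℝ × (Fin m → ℝ) => f z.1 z.2) (Ioi (1:ℝ) ×ˢ U)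

variable {U K : Set (Fin m → ℝ)} {f g : ℝ → (Fin m → ℝ) → ℝ}

theorem omega_open (hU : IsOpen U) : IsOpen (Ioi (1:ℝ) ×ˢ U) := isOpen_Ioi.prod hU

theorem Smo.hasF (hU : IsOpen U) (h : Smo U f) {r : ℝ} {θ : Fin m → ℝ} (hr : 1 < r) (hθ : θ ∈ U) :
    HasFDerivAt (fun z : ℝ × (Fin m → ℝ) => f z.1 z.2)
      (fderiv ℝ (fun z : ℝ × (Fin m → ℝ) => f z.1 z.2) (r, θ)) (r, θ) :=
  ((h.contDiffAt ((omega_open hU).mem_nhds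
    (show (r, θ) ∈ Ioi (1:ℝ) ×ˢ U from ⟨hr, hθ⟩))).differentiableAt (by simp)).hasFDerivAt

theorem Smo.hasR (hU : IsOpen U) (h : Smo U f) {r : ℝ} {θ : Fin m → ℝ} (hr : 1 < r) (hθ : θ ∈ U) :
    HasDerivAt (fun s => f s θ)
      (fderiv ℝ (fun z : ℝ × (Fin m → ℝ) => f z.1 z.2) (r, θ) (1, 0)) r :=
  HasFDerivAt.comp_hasDerivAt (f := fun s : ℝ => (s, θ)) r (h.hasF hU hr hθ)
    ((hasDerivAt_id r).prodMk (hasDerivAt_const r θ))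

theorem Smo.hasT (hU : IsOpen U) (h : Smo U f) {r : ℝ} {θ : Fin m → ℝ} (hr : 1 < r) (hθ : θ ∈ U) :
    HasFDerivAt (f r)
      ((fderiv ℝ (fun z : ℝ × (Fin m → ℝ) => f z.1 z.2) (r, θ)).comp
        (ContinuousLinearMap.inr ℝ ℝ (Fin m → ℝ))) θ :=
  (h.hasF hU hr hθ).comp θ (hasFDerivAt_prodMk_right r θ)

theorem Smo.R_eq (hU : IsOpen U) (h : Smo U f) {r : ℝ} {θ : Fin m → ℝ} (hr : 1 < r) (hθ : θ ∈ U) :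
    pderivR f r θ = fderiv ℝ (fun z : ℝ × (Fin m → ℝ) => f z.1 z.2) (r, θ) (1, 0) :=
  (h.hasR hU hr hθ).deriv

theorem Smo.T_eq (hU : IsOpen U) (h : Smo U f) (j : Fin m)
    {r : ℝ} {θ : Fin m → ℝ} (hr : 1 < r) (hθ : θ ∈ U) :
    pderivTheta j f r θ =
      fderiv ℝ (fun z : ℝ × (Fin m → ℝ) => f z.1 z.2) (r, θ) (0, Pi.single j 1) := by
  unfold pderivTheta
  rw [(h.hasT hU hr hθ).fderiv]; rfl

theorem Smo.dir (hU : IsOpen U) (h : Smo U f) (v : ℝ × (Fin m → ℝ)) :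
    ContDiffOn ℝ (⊤ : ℕ∞)
      (fun z => fderiv ℝ (fun z : ℝ × (Fin m → ℝ) => f z.1 z.2) z v) (Ioi (1:ℝ) ×ˢ U) :=
  (h.fderiv_of_isOpen (omega_open hU) (m := (⊤ : ℕ∞)) (by simp)).clm_apply contDiffOn_const

theorem Smo.R (hU : IsOpen U) (h : Smo U f) : Smo U (pderivR f) :=
  (h.dir hU (1, 0)).congr fun _ hz => h.R_eq hU hz.1 hz.2

theorem Smo.T (hU : IsOpen U) (h : Smo U f) (j : Fin m) : Smo U (pderivTheta j f) :=
  (h.dir hU (0, Pi.single j 1)).congr fun _ hz => h.T_eq hU j hz.1 hz.2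

theorem Smo.Ts (hU : IsOpen U) (h : Smo U f) (α : List (Fin m)) : Smo U (thetaDerivs α f) := by
  induction α with
  | nil => exact h
  | cons j α ih => exact ih.T hU j

theorem Smo.comm (hU : IsOpen U) (h : Smo U f) (j : Fin m)
    {r : ℝ} {θ : Fin m → ℝ} (hr : 1 < r) (hθ : θ ∈ U) :
    pderivTheta j (pderivR f) r θ = pderivR (pderivTheta j f) r θ := by
  rw [(h.R hU).T_eq hU j hr hθ, (h.T hU j).R_eq hU hr hθ]
  have hn := (omega_open hU).mem_nhds (show (r, θ) ∈ Ioi (1:ℝ) ×ˢ U from ⟨hr, hθ⟩)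
  have e1 : (fun z : ℝ × (Fin m → ℝ) => pderivR f z.1 z.2) =ᶠ[𝓝 (r, θ)]
      fun z => fderiv ℝ (fun z : ℝ × (Fin m → ℝ) => f z.1 z.2) z (1, 0) := by
    filter_upwards [hn] with z hz using h.R_eq hU hz.1 hz.2
  have e2 : (fun z : ℝ × (Fin m → ℝ) => pderivTheta j f z.1 z.2) =ᶠ[𝓝 (r, θ)]
      fun z => fderiv ℝ (fun z : ℝ × (Fin m → ℝ) => f z.1 z.2) z (0, Pi.single j 1) := by
    filter_upwards [hn] with z hz using h.T_eq hU j hz.1 hz.2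
  rw [e1.fderiv_eq, e2.fderiv_eq]
  have hd : DifferentiableAt ℝ (fderiv ℝ (fun z : ℝ × (Fin m → ℝ) => f z.1 z.2)) (r, θ) :=
    ((h.fderiv_of_isOpen (omega_open hU) (m := (⊤ : ℕ∞)) (by simp)).contDiffAt hn).differentiableAt
      (by simp)
  have hs : IsSymmSndFDerivAt ℝ (fun z : ℝ × (Fin m → ℝ) => f z.1 z.2) (r, θ) :=
    (h.contDiffAt hn).isSymmSndFDerivAt (by simp only [minSmoothness_of_isRCLikeNormedField]; exact WithTop.coe_le_coe.2 (le_top : (2:ℕ∞) ≤ ⊤))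
  rw [fderiv_clm_apply hd (differentiableAt_const _), fderiv_clm_apply hd (differentiableAt_const _)]
  simpa using hs.eq _ _

theorem R_congr (hfg : ∀ r > 1, ∀ θ ∈ U, f r θ = g r θ) :
    ∀ r > 1, ∀ θ ∈ U, pderivR f r θ = pderivR g r θ := by
  intro r hr θ hθ
  apply Filter.EventuallyEq.deriv_eq
  filter_upwards [Ioi_mem_nhds hr] with s hs using hfg s hs θ hθ

theorem Rs_congr (hfg : ∀ r > 1, ∀ θ ∈ U, f r θ = g r θ) (k : ℕ) :
    ∀ r > 1, ∀ θ ∈ U, (pderivR (m := m))^[k] f r θ = (pderivR (m := m))^[k] g r θ := by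
  induction k with
  | zero => exact hfg
  | succ k ih => simp only [Function.iterate_succ', Function.comp]; exact R_congr ih

theorem T_congr (hU : IsOpen U) (j : Fin m) (hfg : ∀ r > 1, ∀ θ ∈ U, f r θ = g r θ) :
    ∀ r > 1, ∀ θ ∈ U, pderivTheta j f r θ = pderivTheta j g r θ := by
  intro r hr θ hθ
  unfold pderivTheta
  rw [Filter.EventuallyEq.fderiv_eq]
  filter_upwards [hU.mem_nhds hθ] with s hs using hfg r hr s hs

theorem Smo.comms (hU : IsOpen U) (h : Smo U f) (α : List (Fin m)) :
    ∀ r > 1, ∀ θ ∈ U, thetaDerivs α (pderivR f) r θ = pderivR (thetaDerivs α f) r θ := by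
  induction α with
  | nil => intros; rfl
  | cons j α ih =>
    intro r hr θ hθ
    exact (T_congr hU j ih r hr θ hθ).trans ((h.Ts hU α).comm hU j hr hθ)

def Cls (U K : Set (Fin m → ℝ)) (ν : ℝ) (f : ℝ → (Fin m → ℝ) → ℝ) : Prop :=
  Smo U f ∧ DecayOn f ν 1 K

theorem Cls.R {ν : ℝ} (hU : IsOpen U) (hKU : K ⊆ U) (h : Cls U K ν f) :
    Cls U K (ν + 1) (pderivR f) := by
  refine ⟨h.1.R hU, fun k α => ?_⟩
  obtain ⟨C, hC, hb⟩ := h.2 (k + 1) α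
  refine ⟨C, hC, fun r hr θ hθ => ?_⟩
  rw [Rs_congr (h.1.comms hU α) k r hr θ (hKU hθ)]
  have := hb r hr θ hθ
  rw [Function.iterate_succ_apply] at this
  convert this using 3
  push_cast; ring

theorem Cls.T {ν : ℝ} (hU : IsOpen U) (h : Cls U K ν f) (j : Fin m) :
    Cls U K ν (pderivTheta j f) := by
  refine ⟨h.1.T hU j, fun k α => ?_⟩
  have := h.2 k (α ++ [j])
  simpa [thetaDerivs, List.foldr_append] using this

theorem Cls.mono {ν ν' : ℝ} (h : Cls U K ν f) (hν : ν' ≤ ν) : Cls U K ν' f := by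
  refine ⟨h.1, fun k α => ?_⟩
  obtain ⟨C, hC, hb⟩ := h.2 k α
  refine ⟨C, hC, fun r hr θ hθ => (hb r hr θ hθ).trans ?_⟩
  exact mul_le_mul_of_nonneg_left
    (Real.rpow_le_rpow_of_exponent_le (le_of_lt hr) (by linarith)) hC.le

theorem Cls.bound {ν : ℝ} (h : Cls U K ν f) : ∃ C > 0, ∀ r > 1, ∀ θ ∈ K, |f r θ| ≤ C * r ^ (-ν) := by
  obtain ⟨C, hC, hb⟩ := h.2 0 []
  refine ⟨C, hC, fun r hr θ hθ => ?_⟩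
  simpa [thetaDerivs] using hb r hr θ hθ

theorem thetas_indep (g : (Fin m → ℝ) → ℝ) (α : List (Fin m)) :
    ∃ g' : (Fin m → ℝ) → ℝ, thetaDerivs α (fun _ θ => g θ) = fun _ θ => g' θ := by
  induction α with
  | nil => exact ⟨g, rfl⟩
  | cons j α ih =>
    obtain ⟨g', hg'⟩ := ih
    refine ⟨fun θ => fderiv ℝ g' θ (Pi.single j 1), ?_⟩
    change pderivTheta j (thetaDerivs α (fun _ θ => g θ)) = _
    rw [hg']; rfl

theorem Rs_zero (k : ℕ) : (pderivR (m := m))^[k] (fun _ _ => 0) = fun _ _ => 0 := by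
  induction k with
  | zero => rfl
  | succ k ih => rw [Function.iterate_succ', Function.comp, ih]; ext; simp [pderivR]

theorem Cls.indep (hU : IsOpen U) (hK : IsCompact K) (hKU : K ⊆ U) (g : (Fin m → ℝ) → ℝ)
    (hg : ContDiffOn ℝ (⊤ : ℕ∞) g U) : Cls U K 0 (fun _ θ => g θ) := by
  have hS : Smo U (fun _ θ => g θ) := hg.comp contDiffOn_snd fun z hz => hz.2
  refine ⟨hS, fun k α => ?_⟩
  obtain ⟨g', hg'⟩ := thetas_indep g α
  have h2 := hS.Ts hU α
  rw [hg'] at h2 ⊢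
  rcases k with _ | k
  · have hc : ContinuousOn g' K := by
      have : ContinuousOn (fun θ => ((2:ℝ), θ)) K := by fun_prop
      exact h2.continuousOn.comp this fun θ hθ => ⟨by norm_num, hKU hθ⟩
    obtain ⟨C, hC⟩ := hK.exists_bound_of_continuousOn hc
    refine ⟨|C| + 1, by positivity, fun r hr θ hθ => ?_⟩
    have := hC θ hθ
    simp at this ⊢
    linarith [le_abs_self C]
  · refine ⟨1, one_pos, fun r hr θ hθ => ?_⟩
    rw [Function.iterate_succ_apply]
    have : pderivR (m := m) (fun _ θ => g' θ) = fun _ _ => 0 := by ext; simp [pderivR]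
    rw [this, Rs_zero]
    simp
    exact Real.rpow_nonneg (by linarith [mem_Ioi.1 hr]) _

end Coef

section DP

variable {m : ℕ}

/-- Total derivative of the energy along a curve. -/
noncomputable def Dp (R R' P P' A0 A0' : ℝ) (W W' A1 A1' : Fin m → ℝ)
    (H H' A2 A2' : Fin m → Fin m → ℝ) : ℝ :=
  2 * (P * P')
    + ((∑ j, ∑ k, (H' j k * (W j * W k) + H j k * (W' j * W k) + H j k * (W j * W' k)))
        * (R⁻¹ * R⁻¹) + (∑ j, ∑ k, H j k * (W j * W k)) * ((-2) * (R' * (R⁻¹ * (R⁻¹ * R⁻¹)))))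
    + (A0' * (P * P) + A0 * (2 * (P * P')))
    + ((∑ j, (A1' j * (P * W j) + A1 j * (P' * W j) + A1 j * (P * W' j))) * R⁻¹
        + (∑ j, A1 j * (P * W j)) * (-(R' * (R⁻¹ * R⁻¹))))
    + ((∑ j, ∑ k, (A2' j k * (W j * W k) + A2 j k * (W' j * W k) + A2 j k * (W j * W' k)))
        * (R⁻¹ * R⁻¹) + (∑ j, ∑ k, A2 j k * (W j * W k)) * ((-2) * (R' * (R⁻¹ * (R⁻¹ * R⁻¹)))))

theorem hasDeriv_quad {W : ℝ → Fin m → ℝ} {W' : Fin m → ℝ} {H : ℝ → Fin m → Fin m → ℝ}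
    {H' : Fin m → Fin m → ℝ} {s : ℝ}
    (hW : ∀ j, HasDerivAt (fun s => W s j) (W' j) s)
    (hH : ∀ j k, HasDerivAt (fun s => H s j k) (H' j k) s) :
    HasDerivAt (fun s => ∑ j, ∑ k, H s j k * W s j * W s k)
      (∑ j, ∑ k, (H' j k * (W s j * W s k) + H s j k * (W' j * W s k)
        + H s j k * (W s j * W' k))) s := by
  refine HasDerivAt.fun_sum fun j _ => HasDerivAt.fun_sum fun k _ => ?_
  refine (((hH j k).fun_mul (hW j)).fun_mul (hW k)).congr_deriv ?_
  ring

theorem hasDeriv_energy {R P A0 : ℝ → ℝ} {W A1 : ℝ → Fin m → ℝ} {H A2 : ℝ → Fin m → Fin m → ℝ}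
    {R' P' A0' : ℝ} {W' A1' : Fin m → ℝ} {H' A2' : Fin m → Fin m → ℝ} {s : ℝ}
    (hR0 : R s ≠ 0)
    (hR : HasDerivAt R R' s) (hP : HasDerivAt P P' s) (hA0 : HasDerivAt A0 A0' s)
    (hW : ∀ j, HasDerivAt (fun s => W s j) (W' j) s)
    (hA1 : ∀ j, HasDerivAt (fun s => A1 s j) (A1' j) s)
    (hH : ∀ j k, HasDerivAt (fun s => H s j k) (H' j k) s)
    (hA2 : ∀ j k, HasDerivAt (fun s => A2 s j k) (A2' j k) s) :
    HasDerivAt (fun s => P s ^ 2 + (∑ j, ∑ k, H s j k * W s j * W s k) / R s ^ 2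
      + A0 s * P s ^ 2 + (∑ j, A1 s j * P s * W s j) / R s
      + (∑ j, ∑ k, A2 s j k * W s j * W s k) / R s ^ 2)
      (Dp (R s) R' (P s) P' (A0 s) A0' (W s) W' (A1 s) A1' (H s) H' (A2 s) A2') s := by
  have h1 : HasDerivAt (fun s => ∑ j, A1 s j * P s * W s j)
      (∑ j, (A1' j * (P s * W s j) + A1 s j * (P' * W s j) + A1 s j * (P s * W' j))) s := by
    refine HasDerivAt.fun_sum fun j _ => ?_
    refine (((hA1 j).fun_mul hP).fun_mul (hW j)).congr_deriv ?_
    ring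
  have hq := hasDeriv_quad hW hH
  have hq2 := hasDeriv_quad hW hA2
  have hP2 := hP.fun_pow 2
  have hR2 := hR.fun_pow 2
  have hR20 : R s ^ 2 ≠ 0 := pow_ne_zero _ hR0
  refine ((((hP2.fun_add (hq.fun_div hR2 hR20)).fun_add (hA0.fun_mul hP2)).fun_add
    (h1.fun_div hR hR0)).fun_add (hq2.fun_div hR2 hR20)).congr_deriv ?_
  unfold Dp
  simp only [mul_assoc]
  generalize (∑ j, (A1' j * (P s * W s j) + A1 s j * (P' * W s j) + A1 s j * (P s * W' j))) = x1
  generalize (∑ j, A1 s j * (P s * W s j)) = x2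
  generalize (∑ j, ∑ k, (A2' j k * (W s j * W s k) + A2 s j k * (W' j * W s k)
    + A2 s j k * (W s j * W' k))) = x3
  generalize (∑ j, ∑ k, A2 s j k * (W s j * W s k)) = x4
  generalize (∑ j, ∑ k, (H' j k * (W s j * W s k) + H s j k * (W' j * W s k)
    + H s j k * (W s j * W' k))) = x5
  generalize (∑ j, ∑ k, H s j k * (W s j * W s k)) = x6
  push_cast
  field_simp
  ring

variable {E : Type*} [NormedAddCommGroup E] [NormedSpace ℝ E] {ι : Type*}
variable {e : ι → E} {w : ι → ℝ} {τ : E → ℝ} {S : Set E}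

theorem Sym.quad (hτ : ∀ z ∈ S, 1 ≤ τ z) {N : ℕ}
    {W W' : E → Fin m → ℝ} {H H' : E → Fin m → Fin m → ℝ} {R R' : E → ℝ}
    (hW : ∀ j, Sym e w τ S N 0 (fun z => W z j)) (hW' : ∀ j, Sym e w τ S N 0 (fun z => W' z j))
    (hH : ∀ j k, Sym e w τ S N 0 (fun z => H z j k))
    (hH' : ∀ j k, Sym e w τ S N 0 (fun z => H' z j k))
    (hR : Sym e w τ S N (-1) (fun z => (R z)⁻¹)) (hR' : Sym e w τ S N 0 R') :
    Sym e w τ S N (-1) (fun z =>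
      (∑ j, ∑ k, (H' z j k * (W z j * W z k) + H z j k * (W' z j * W z k)
        + H z j k * (W z j * W' z k))) * ((R z)⁻¹ * (R z)⁻¹)
      + (∑ j, ∑ k, H z j k * (W z j * W z k)) *
        ((-2) * (R' z * ((R z)⁻¹ * ((R z)⁻¹ * (R z)⁻¹))))) := by
  have m0 : ∀ {F G : E → ℝ}, Sym e w τ S N 0 F → Sym e w τ S N 0 G →
      Sym e w τ S N 0 (fun z => F z * G z) := fun h1 h2 => h1.mul hτ h2 (by norm_num)
  have hR2 : Sym e w τ S N (-1) (fun z => (R z)⁻¹ * (R z)⁻¹) := hR.mul hτ hR (by norm_num)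
  have hR3 : Sym e w τ S N (-1) (fun z => (R z)⁻¹ * ((R z)⁻¹ * (R z)⁻¹)) :=
    hR.mul hτ hR2 (by norm_num)
  refine Sym.add ?_ ?_
  · refine Sym.mul hτ (a := 0) (b := -1) ?_ hR2 (by norm_num)
    exact Sym.sum _ fun j _ => Sym.sum _ fun k _ =>
      ((m0 (hH' j k) (m0 (hW j) (hW k))).add (m0 (hH j k) (m0 (hW' j) (hW k)))).add
        (m0 (hH j k) (m0 (hW j) (hW' k)))
  · refine Sym.mul hτ (a := 0) (b := -1) ?_ ?_ (by norm_num)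
    · exact Sym.sum _ fun j _ => Sym.sum _ fun k _ => m0 (hH j k) (m0 (hW j) (hW k))
    · exact (Sym.const (-2)).mul hτ (hR'.mul hτ hR3 (c := -1) (by norm_num)) (by norm_num)

theorem Sym.Dp (hτ : ∀ z ∈ S, 1 ≤ τ z) {N : ℕ} {κ : ℝ} (hκ1 : -1 ≤ κ) (hκ0 : κ ≤ 0)
    {R R' P P' A0 A0' : E → ℝ}
    {W W' A1 A1' : E → Fin m → ℝ} {H H' A2 A2' : E → Fin m → Fin m → ℝ}
    (hR : Sym e w τ S N (-1) (fun z => (R z)⁻¹)) (hR' : Sym e w τ S N 0 R')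
    (hP : Sym e w τ S N 0 P) (hP' : Sym e w τ S N κ P')
    (hA0 : Sym e w τ S N (-1) A0) (hA0' : Sym e w τ S N (-1) A0')
    (hW : ∀ j, Sym e w τ S N 0 (fun z => W z j)) (hW' : ∀ j, Sym e w τ S N 0 (fun z => W' z j))
    (hA1 : ∀ j, Sym e w τ S N 0 (fun z => A1 z j))
    (hA1' : ∀ j, Sym e w τ S N 0 (fun z => A1' z j))
    (hH : ∀ j k, Sym e w τ S N 0 (fun z => H z j k))
    (hH' : ∀ j k, Sym e w τ S N 0 (fun z => H' z j k))
    (hA2 : ∀ j k, Sym e w τ S N 0 (fun z => A2 z j k))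
    (hA2' : ∀ j k, Sym e w τ S N 0 (fun z => A2' z j k)) :
    Sym e w τ S N κ (fun z => Scattering.Dp (R z) (R' z) (P z) (P' z) (A0 z) (A0' z)
      (W z) (W' z) (A1 z) (A1' z) (H z) (H' z) (A2 z) (A2' z)) := by
  unfold Scattering.Dp
  have m0 : ∀ {F G : E → ℝ}, Sym e w τ S N 0 F → Sym e w τ S N 0 G →
      Sym e w τ S N 0 (fun z => F z * G z) := fun h1 h2 => h1.mul hτ h2 (by norm_num)
  have hP0 : Sym e w τ S N 0 P' := hP'.mono hτ hκ0
  have hR2 : Sym e w τ S N (-1) (fun z => (R z)⁻¹ * (R z)⁻¹) := hR.mul hτ hR (by norm_num)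
  have hPP : Sym e w τ S N κ (fun z => 2 * (P z * P' z)) :=
    (Sym.const 2).mul hτ (hP.mul hτ hP' (le_refl (0 + κ))) (by simp)
  refine Sym.add (Sym.add (Sym.add (Sym.add hPP ?_) (Sym.add ?_ ?_)) (Sym.add ?_ ?_)) ?_
  · exact (Sym.quad hτ hW hW' hH hH' hR hR').mono hτ hκ1
  · exact hA0'.mul hτ (m0 hP hP) (by linarith)
  · exact hA0.mul hτ hPP (by linarith)
  · refine Sym.mul hτ (a := 0) (b := -1) ?_ hR (by linarith)
    exact Sym.sum _ fun j _ =>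
      ((m0 (hA1' j) (m0 hP (hW j))).add (m0 (hA1 j) (m0 hP0 (hW j)))).add
        (m0 (hA1 j) (m0 hP (hW' j)))
  · refine Sym.mul hτ (a := 0) (b := -1) ?_ ?_ (by linarith)
    · exact Sym.sum _ fun j _ => m0 (hA1 j) (m0 hP (hW j))
    · exact (hR'.mul hτ hR2 (by norm_num)).neg hτ
  · exact (Sym.quad hτ hW hW' hA2 hA2' hR hR').mono hτ hκ1

end DP

section PD

variable {m : ℕ} {μ : ℝ} {U : Set (Fin m → ℝ)} (c : Coeffs m μ U)

theorem pdRho_eq {r : ℝ} {θ : Fin m → ℝ} (ρ : ℝ) (ω : Fin m → ℝ) (hr : 1 < r) :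
    pdRho c.p r θ ρ ω = Dp r 0 ρ 1 (c.a0 r θ) 0 ω (fun _ => 0) (c.a1 r θ) (fun _ => 0)
      (c.hM θ) (fun _ _ => 0) (c.a2 r θ) (fun _ _ => 0) :=
  (hasDeriv_energy (R := fun _ => r) (P := fun s => s) (A0 := fun _ => c.a0 r θ) (W := fun _ => ω)
    (A1 := fun _ => c.a1 r θ) (H := fun _ => c.hM θ) (A2 := fun _ => c.a2 r θ) (by linarith)
    (hasDerivAt_const _ _) (hasDerivAt_id' _) (hasDerivAt_const _ _) (fun _ => hasDerivAt_const _ _)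
    (fun _ => hasDerivAt_const _ _) (fun _ _ => hasDerivAt_const _ _)
    (fun _ _ => hasDerivAt_const _ _)).deriv

theorem pdR_eq (hU : IsOpen U) {r : ℝ} {θ : Fin m → ℝ} (ρ : ℝ) (ω : Fin m → ℝ) (hr : 1 < r)
    (hθ : θ ∈ U) :
    pdR c.p r θ ρ ω = Dp r 1 ρ 0 (c.a0 r θ) (pderivR c.a0 r θ) ω (fun _ => 0) (c.a1 r θ)
      (fun j => pderivR (fun r θ => c.a1 r θ j) r θ)
      (c.hM θ) (fun _ _ => 0) (c.a2 r θ) (fun j k => pderivR (fun r θ => c.a2 r θ j k) r θ) := by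
  have key : ∀ f : ℝ → (Fin m → ℝ) → ℝ, Smo U f →
      HasDerivAt (fun s => f s θ) (pderivR f r θ) r := fun f hf =>
    (hf.hasR hU hr hθ).differentiableAt.hasDerivAt
  exact (hasDeriv_energy (R := fun s => s) (P := fun _ => ρ) (A0 := fun s => c.a0 s θ)
    (W := fun _ => ω)
    (A1 := fun s => c.a1 s θ) (H := fun _ => c.hM θ) (A2 := fun s => c.a2 s θ) (by linarith)
    (hasDerivAt_id' _) (hasDerivAt_const _ _) (key _ c.a0_smooth) (fun _ => hasDerivAt_const _ _)
    (fun j => key (fun r θ => c.a1 r θ j) (c.a1_smooth j)) (fun _ _ => hasDerivAt_const _ _)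
    (fun j k => key (fun r θ => c.a2 r θ j k) (c.a2_smooth j k))).deriv

theorem pdOmega_eq {r : ℝ} {θ : Fin m → ℝ} (ρ : ℝ) (ω : Fin m → ℝ) (hr : 1 < r) (i : Fin m) :
    pdOmega c.p i r θ ρ ω = Dp r 0 ρ 0 (c.a0 r θ) 0 ω (Pi.single i 1) (c.a1 r θ) (fun _ => 0)
      (c.hM θ) (fun _ _ => 0) (c.a2 r θ) (fun _ _ => 0) := by
  unfold pdOmega
  have hd : DifferentiableAt ℝ (fun ω' => c.p r θ ρ ω') ω := by
    unfold Coeffs.p energy; fun_prop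
  rw [← hd.lineDeriv_eq_fderiv]
  have := (hasDeriv_energy (s := 0) (R := fun _ => r) (P := fun _ => ρ) (A0 := fun _ => c.a0 r θ)
    (W := fun s => ω + s • Pi.single i 1) (W' := Pi.single i 1)
    (A1 := fun _ => c.a1 r θ) (H := fun _ => c.hM θ) (A2 := fun _ => c.a2 r θ) (by linarith)
    (hasDerivAt_const _ _) (hasDerivAt_const _ _) (hasDerivAt_const _ _) (fun j => by
      simpa using ((hasDerivAt_id' (0:ℝ)).mul_const ((Pi.single i 1 : Fin m → ℝ) j)).const_add (ω j))
    (fun _ => hasDerivAt_const _ _) (fun _ _ => hasDerivAt_const _ _)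
    (fun _ _ => hasDerivAt_const _ _)).deriv
  simp only [zero_smul, add_zero] at this
  exact this

theorem pdTheta_eq (hU : IsOpen U) {r : ℝ} {θ : Fin m → ℝ} (ρ : ℝ) (ω : Fin m → ℝ) (hr : 1 < r)
    (hθ : θ ∈ U) (i : Fin m) :
    pdTheta c.p i r θ ρ ω = Dp r 0 ρ 0 (c.a0 r θ) (pderivTheta i c.a0 r θ) ω (fun _ => 0)
      (c.a1 r θ) (fun j => pderivTheta i (fun r θ => c.a1 r θ j) r θ)
      (c.hM θ) (fun j k => pderivTheta i (fun _ θ => c.hM θ j k) r θ)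
      (c.a2 r θ) (fun j k => pderivTheta i (fun r θ => c.a2 r θ j k) r θ) := by
  unfold pdTheta
  have hS : ∀ j k, Smo U (fun _ θ => c.hM θ j k) := fun j k =>
    (c.hM_smooth j k).comp contDiffOn_snd fun z hz => hz.2
  have key0 : ∀ f : ℝ → (Fin m → ℝ) → ℝ, Smo U f → DifferentiableAt ℝ (fun θ => f r θ) θ :=
    fun f hf => (hf.hasT hU hr hθ).differentiableAt
  have key : ∀ f : ℝ → (Fin m → ℝ) → ℝ, Smo U f →
      HasDerivAt (fun s : ℝ => f r (θ + s • Pi.single i 1)) (pderivTheta i f r θ) 0 := fun f hf =>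
    (key0 f hf).hasFDerivAt.hasLineDerivAt _
  have hd : DifferentiableAt ℝ (fun θ' => c.p r θ' ρ ω) θ := by
    have h0 := key0 _ c.a0_smooth
    have h1 := fun j => key0 (fun r θ => c.a1 r θ j) (c.a1_smooth j)
    have h2 := fun j k => key0 (fun r θ => c.a2 r θ j k) (c.a2_smooth j k)
    have h3 := fun j k => key0 _ (hS j k)
    unfold Coeffs.p energy
    fun_prop
  rw [← hd.lineDeriv_eq_fderiv]
  have := (hasDeriv_energy (s := 0) (R := fun _ => r) (P := fun _ => ρ)
    (A0 := fun s => c.a0 r (θ + s • Pi.single i 1))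
    (W := fun _ => ω)
    (A1 := fun s => c.a1 r (θ + s • Pi.single i 1)) (H := fun s => c.hM (θ + s • Pi.single i 1))
    (A2 := fun s => c.a2 r (θ + s • Pi.single i 1)) (by linarith)
    (hasDerivAt_const _ _) (hasDerivAt_const _ _) (key _ c.a0_smooth)
    (fun _ => hasDerivAt_const _ _)
    (fun j => key (fun r θ => c.a1 r θ j) (c.a1_smooth j)) (fun j k => key _ (hS j k))
    (fun j k => key (fun r θ => c.a2 r θ j k) (c.a2_smooth j k))).deriv
  simp only [zero_smul, add_zero] at this
  exact this

end PD

/-- The space-time phase space. -/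
abbrev ST (m : ℕ) : Type := ℝ × ℝ × (Fin m → ℝ) × ℝ × (Fin m → ℝ)

/-- Coordinate directions. -/
inductive Dir (m : ℕ) : Type
  | t : Dir m
  | r : Dir m
  | th (j : Fin m) : Dir m
  | rh : Dir m
  | om (j : Fin m) : Dir m

noncomputable def eV (m : ℕ) : Dir m → ST m
  | .t => (1, 0, 0, 0, 0)
  | .r => (0, 1, 0, 0, 0)
  | .th j => (0, 0, Pi.single j 1, 0, 0)
  | .rh => (0, 0, 0, 1, 0)
  | .om j => (0, 0, 0, 0, Pi.single j 1)

noncomputable def wV (m : ℕ) : Dir m → ℝ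
  | .t => 1
  | .r => 1
  | .th _ => 0
  | .rh => 0
  | .om _ => 0

def SV (m : ℕ) : Set (ST m) := {z | z.1 ≤ 0}

def CS (m : ℕ) (T₀ : ℝ) : ℕ → ℝ → (ST m → ℝ) → Prop :=
  Sym (eV m) (wV m) (fun z => -(z.1 + T₀)) (SV m)

section Traj

variable {m : ℕ} {T₀ : ℝ}

theorem tau_ge (hT : T₀ ≤ -1) : ∀ z ∈ SV m, 1 ≤ -(z.1 + T₀) := by
  intro z hz
  have : z.1 ≤ 0 := hz
  linarith

theorem CS.tonly {N : ℕ} {ν : ℝ} {f f' : ℝ → ℝ} (hb : ∃ C, ∀ t ≤ 0, |f t| ≤ C * (-(t + T₀)) ^ ν)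
    (hd : ∀ t ≤ 0, HasDerivAt f (f' t) t) (hf' : CS m T₀ N (ν - 1) (fun z => f' z.1)) :
    CS m T₀ (N + 1) ν (fun z => f z.1) := by
  refine ⟨?_, fun d => ?_⟩
  · obtain ⟨C, hC⟩ := hb
    exact ⟨C, fun z hz => hC z.1 hz⟩
  · cases d with
    | t =>
      refine ⟨fun z => f' z.1, fun z hz => ?_, hf'⟩
      have h1 : HasDerivAt f (f' z.1) (z.1 + 0) := by simpa using hd z.1 hz
      simpa [eV] using h1.comp_const_add z.1 0
    | r => exact ⟨fun _ => 0, fun z _ => by simpa [eV] using hasDerivAt_const _ _, Sym.zero⟩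
    | th j => exact ⟨fun _ => 0, fun z _ => by simpa [eV] using hasDerivAt_const _ _, Sym.zero⟩
    | rh => exact ⟨fun _ => 0, fun z _ => by simpa [eV] using hasDerivAt_const _ _, Sym.zero⟩
    | om j => exact ⟨fun _ => 0, fun z _ => by simpa [eV] using hasDerivAt_const _ _, Sym.zero⟩

theorem CS.tonly0 {ν : ℝ} {f : ℝ → ℝ} (hb : ∃ C, ∀ t ≤ 0, |f t| ≤ C * (-(t + T₀)) ^ ν) :
    CS m T₀ 0 ν (fun z => f z.1) := by
  obtain ⟨C, hC⟩ := hb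
  exact ⟨C, fun z hz => hC z.1 hz⟩

theorem tau_deriv (hT : T₀ ≤ -1) (s : ℝ) {t : ℝ} (ht : t ≤ 0) :
    HasDerivAt (fun t => (-(t + T₀)) ^ s) ((-s) * (-(t + T₀)) ^ (s - 1)) t := by
  have h1 : HasDerivAt (fun t => -(t + T₀)) (-1) t := ((hasDerivAt_id' t).add_const T₀).neg
  refine (h1.rpow_const (p := s) (Or.inl (by linarith))).congr_deriv ?_
  ring

theorem CS.tau (hT : T₀ ≤ -1) (N : ℕ) (s : ℝ) : CS m T₀ N s (fun z => (-(z.1 + T₀)) ^ s) := by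
  have hb : ∀ s : ℝ, ∃ C, ∀ t ≤ 0, |(-(t + T₀)) ^ s| ≤ C * (-(t + T₀)) ^ s := fun s =>
    ⟨1, fun t ht => by rw [abs_of_nonneg (Real.rpow_nonneg (by linarith) _)]; simp⟩
  induction N generalizing s with
  | zero => exact CS.tonly0 (f := fun t => (-(t + T₀)) ^ s) (hb s)
  | succ N ih =>
    refine CS.tonly (hb s) (fun t ht => tau_deriv hT s ht) ?_
    exact (Sym.const (-s)).mul (tau_ge hT) (ih (s - 1)) (by simp)

/-- The width function `δ₀ - C τ^b` has a symbolic inverse. -/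
theorem CS.width (hT : T₀ ≤ -1) {δ₀ C b : ℝ} (hδ : 0 < δ₀) (hb : b ≤ 0)
    (hd : ∀ t ≤ 0, δ₀ / 2 ≤ δ₀ - C * (-(t + T₀)) ^ b) (N : ℕ) :
    CS m T₀ N 0 (fun z => (δ₀ - C * (-(z.1 + T₀)) ^ b)⁻¹) := by
  have hbd : ∃ D, ∀ t ≤ 0, |(δ₀ - C * (-(t + T₀)) ^ b)⁻¹| ≤ D * (-(t + T₀)) ^ (0:ℝ) := by
    refine ⟨(δ₀ / 2)⁻¹, fun t ht => ?_⟩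
    have h1 := hd t ht
    have h2 : 0 < δ₀ - C * (-(t + T₀)) ^ b := by linarith
    rw [abs_of_pos (inv_pos.2 h2), Real.rpow_zero, mul_one]
    exact inv_anti₀ (by linarith) h1
  have hτ := tau_ge (m := m) hT
  induction N with
  | zero => exact CS.tonly0 (f := fun t => (δ₀ - C * (-(t + T₀)) ^ b)⁻¹) hbd
  | succ N ih =>
    refine CS.tonly (f' := fun t => ((-C * b) * (-(t + T₀)) ^ (b - 1)) *
      ((δ₀ - C * (-(t + T₀)) ^ b)⁻¹ * (δ₀ - C * (-(t + T₀)) ^ b)⁻¹)) hbd (fun t ht => ?_) ?_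
    · have h1 := hd t ht
      have h2 : δ₀ - C * (-(t + T₀)) ^ b ≠ 0 := by linarith
      refine ((((tau_deriv hT b ht).const_mul C).const_sub δ₀).fun_inv h2).congr_deriv ?_
      field_simp
    · refine Sym.mul hτ (a := b - 1) (b := 0) ?_ ?_ (by linarith)
      · exact (Sym.const (-C * b)).mul hτ (CS.tau hT N (b - 1)) (by simp)
      · exact ih.mul hτ ih (by simp)

variable {μ : ℝ} {U K : Set (Fin m → ℝ)} (c : Coeffs m μ U)
  (rS : ℝ → ℝ) (θS : ℝ → Fin m → ℝ) (ρS : ℝ → ℝ) (ωS : ℝ → Fin m → ℝ)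

def TH (U K : Set (Fin m → ℝ)) (T₀ : ℝ) (N : ℕ) : Prop :=
  CS m T₀ N 0 (fun z => ρS z.1) ∧ (∀ j, CS m T₀ N 0 (fun z => ωS z.1 j)) ∧
    CS m T₀ N (-1) (fun z => (rS z.1)⁻¹) ∧
    ∀ (f : ℝ → (Fin m → ℝ) → ℝ) (ν : ℝ), 0 ≤ ν → Cls U K ν f →
      CS m T₀ N (-ν) (fun z => f (rS z.1) (θS z.1))

variable {rS θS ρS ωS}

theorem traj_vel (hμ : 0 < μ) (hU : IsOpen U) (hK : IsCompact K) (hKU : K ⊆ U) (hT : T₀ ≤ -1)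
    (hsol : IsHamSolOn c.p rS θS ρS ωS (Iic 0))
    (hr : ∀ t ≤ 0, 1 < rS t) (hθ : ∀ t ≤ 0, θS t ∈ K) :
    ∃ (vr vρ : ℝ → ℝ) (vθ vω : Fin m → ℝ → ℝ),
      (∀ t ≤ 0, HasDerivAt rS (vr t) t) ∧ (∀ t ≤ 0, HasDerivAt ρS (vρ t) t) ∧
      (∀ j, ∀ t ≤ 0, HasDerivAt (fun s => θS s j) (vθ j t) t) ∧
      (∀ j, ∀ t ≤ 0, HasDerivAt (fun s => ωS s j) (vω j t) t) ∧
      ∀ N, TH rS θS ρS ωS U K T₀ N → CS m T₀ N 0 (fun z => vr z.1) ∧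
        CS m T₀ N (-1) (fun z => vρ z.1) ∧ (∀ j, CS m T₀ N (-1) (fun z => vθ j z.1)) ∧
        (∀ j, CS m T₀ N (-1) (fun z => vω j z.1)) := by
  have hτ := tau_ge (m := m) hT
  have cH : ∀ j k, Cls U K 0 (fun _ θ => c.hM θ j k) := fun j k =>
    Cls.indep hU hK hKU _ (c.hM_smooth j k)
  have c0 : Cls U K 1 c.a0 :=
    Cls.mono (ν := 1 + μ) ⟨c.a0_smooth, c.a0_decay K hK hKU⟩ (by linarith)
  have c1 : ∀ j, Cls U K 0 (fun r θ => c.a1 r θ j) := fun j =>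
    Cls.mono (ν := μ) ⟨c.a1_smooth j, c.a1_decay K hK hKU j⟩ (by linarith)
  have c2 : ∀ j k, Cls U K 0 (fun r θ => c.a2 r θ j k) := fun j k =>
    Cls.mono (ν := μ) ⟨c.a2_smooth j k, c.a2_decay K hK hKU j k⟩ (by linarith)
  refine ⟨_, _, fun i => _, fun i => _,
    fun t ht => ((hsol t ht).1).congr_deriv (pdRho_eq c _ _ (hr t ht)),
    fun t ht => ((hsol t ht).2.2.1).congr_deriv
      (congrArg _ (pdR_eq c hU _ _ (hr t ht) (hKU (hθ t ht)))),
    fun i t ht => ((hsol t ht).2.1 i).congr_deriv (pdOmega_eq c _ _ (hr t ht) i),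
    fun i t ht => ((hsol t ht).2.2.2 i).congr_deriv
      (congrArg _ (pdTheta_eq c hU _ _ (hr t ht) (hKU (hθ t ht)) i)), ?_⟩
  rintro N ⟨h1, h2, h3, h4⟩
  have f0 : ∀ {f : ℝ → (Fin m → ℝ) → ℝ}, Cls U K 0 f →
      CS m T₀ N 0 (fun z => f (rS z.1) (θS z.1)) := fun {f} h => by
    simpa using h4 f 0 le_rfl h
  have f0' : ∀ {f : ℝ → (Fin m → ℝ) → ℝ}, Cls U K 0 f →
      CS m T₀ N 0 (fun z => pderivR f (rS z.1) (θS z.1)) := fun {f} h =>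
    f0 ((h.R hU hKU).mono (by norm_num))
  have z : ∀ ν, CS m T₀ N ν (fun _ => 0) := fun ν => Sym.zero
  have o : CS m T₀ N 0 (fun _ => 1) := Sym.const 1
  refine ⟨?_, ?_, fun i => ?_, fun i => ?_⟩
  · exact Sym.Dp hτ (by norm_num) (by norm_num) h3 (z _) h1 o (h4 _ 1 (by norm_num) c0) (z _) h2
      (fun _ => z _) (fun j => f0 (c1 j)) (fun _ => z _) (fun j k => f0 (cH j k)) (fun _ _ => z _)
      (fun j k => f0 (c2 j k)) (fun _ _ => z _)
  · refine Sym.neg hτ ?_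
    exact Sym.Dp hτ (by norm_num) (by norm_num) h3 o h1 (z _) (h4 _ 1 (by norm_num) c0)
      (h4 _ 1 (by norm_num) ((c0.R hU hKU).mono (by norm_num))) h2
      (fun _ => z _) (fun j => f0 (c1 j)) (fun j => f0' (c1 j)) (fun j k => f0 (cH j k))
      (fun _ _ => z _) (fun j k => f0 (c2 j k)) (fun j k => f0' (c2 j k))
  · exact Sym.Dp hτ (by norm_num) (by norm_num) h3 (z _) h1 (z _) (h4 _ 1 (by norm_num) c0) (z _) h2
      (fun _ => Sym.const _) (fun j => f0 (c1 j)) (fun _ => z _) (fun j k => f0 (cH j k))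
      (fun _ _ => z _) (fun j k => f0 (c2 j k)) (fun _ _ => z _)
  · refine Sym.neg hτ ?_
    exact Sym.Dp hτ (by norm_num) (by norm_num) h3 (z _) h1 (z _) (h4 _ 1 (by norm_num) c0)
      (h4 _ 1 (by norm_num) (c0.T hU i)) h2
      (fun _ => z _) (fun j => f0 (c1 j)) (fun j => f0 ((c1 j).T hU i)) (fun j k => f0 (cH j k))
      (fun j k => f0 ((cH j k).T hU i)) (fun j k => f0 (c2 j k)) (fun j k => f0 ((c2 j k).T hU i))

theorem traj (hμ : 0 < μ) (hU : IsOpen U) (hK : IsCompact K) (hKU : K ⊆ U) (hT : T₀ ≤ -1)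
    {c₀ C₀ : ℝ} (hc₀ : 0 < c₀)
    (hsol : IsHamSolOn c.p rS θS ρS ωS (Iic 0))
    (hr : ∀ t ≤ 0, 1 < rS t) (hθ : ∀ t ≤ 0, θS t ∈ K) (hρ : ∀ t ≤ 0, |ρS t| ≤ C₀)
    (hω : ∀ t ≤ 0, eNorm (ωS t) ≤ C₀) (hrb : ∀ t ≤ 0, c₀ * (-(t + T₀)) ≤ rS t) :
    ∃ (vr vρ : ℝ → ℝ) (vθ vω : Fin m → ℝ → ℝ),
      (∀ t ≤ 0, HasDerivAt rS (vr t) t) ∧ (∀ t ≤ 0, HasDerivAt ρS (vρ t) t) ∧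
      (∀ j, ∀ t ≤ 0, HasDerivAt (fun s => θS s j) (vθ j t) t) ∧
      (∀ j, ∀ t ≤ 0, HasDerivAt (fun s => ωS s j) (vω j t) t) ∧
      ∀ N, CS m T₀ N 0 (fun z => vr z.1) ∧
        CS m T₀ N (-1) (fun z => vρ z.1) ∧ (∀ j, CS m T₀ N (-1) (fun z => vθ j z.1)) ∧
        (∀ j, CS m T₀ N (-1) (fun z => vω j z.1)) := by
  obtain ⟨vr, vρ, vθ, vω, d1, d2, d3, d4, hN⟩ := traj_vel c hμ hU hK hKU hT hsol hr hθ
  refine ⟨vr, vρ, vθ, vω, d1, d2, d3, d4, fun N => hN N ?_⟩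
  have hτ := tau_ge (m := m) hT
  have b1 : ∃ C, ∀ t ≤ 0, |ρS t| ≤ C * (-(t + T₀)) ^ (0:ℝ) :=
    ⟨C₀, fun t ht => by simpa using hρ t ht⟩
  have b2 : ∀ j, ∃ C, ∀ t ≤ 0, |ωS t j| ≤ C * (-(t + T₀)) ^ (0:ℝ) := fun j =>
    ⟨C₀, fun t ht => by simpa using (eNorm_coord _ j).trans (hω t ht)⟩
  have bp : ∀ ν : ℝ, 0 ≤ ν → ∀ t ≤ 0, rS t ^ (-ν) ≤ c₀ ^ (-ν) * (-(t + T₀)) ^ (-ν) := by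
    intro ν hν t ht
    have hp : 0 < -(t + T₀) := by linarith
    rw [← Real.mul_rpow hc₀.le hp.le]
    exact Real.rpow_le_rpow_of_nonpos (by positivity) (hrb t ht) (by linarith)
  have b3 : ∃ C, ∀ t ≤ 0, |(rS t)⁻¹| ≤ C * (-(t + T₀)) ^ (-1:ℝ) := by
    refine ⟨c₀ ^ (-1:ℝ), fun t ht => ?_⟩
    have h0 : 0 < rS t := by linarith [hr t ht]
    rw [abs_of_pos (inv_pos.2 h0), ← Real.rpow_neg_one]
    exact bp 1 (by norm_num) t ht
  have b4 : ∀ (f : ℝ → (Fin m → ℝ) → ℝ) (ν : ℝ), 0 ≤ ν → Cls U K ν f →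
      ∃ C, ∀ t ≤ 0, |f (rS t) (θS t)| ≤ C * (-(t + T₀)) ^ (-ν) := by
    intro f ν hν hf
    obtain ⟨C, hC, hb⟩ := hf.bound
    refine ⟨C * c₀ ^ (-ν), fun t ht => (hb _ (hr t ht) _ (hθ t ht)).trans ?_⟩
    rw [mul_assoc]
    exact mul_le_mul_of_nonneg_left (bp ν hν t ht) hC.le
  induction N with
  | zero =>
    exact ⟨CS.tonly0 b1, fun j => CS.tonly0 (f := fun t => ωS t j) (b2 j),
      CS.tonly0 (f := fun t => (rS t)⁻¹) b3,
      fun f ν hν hf => CS.tonly0 (f := fun t => f (rS t) (θS t)) (b4 f ν hν hf)⟩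
  | succ N ih =>
    obtain ⟨g1, g2, g3, g4⟩ := hN N ih
    obtain ⟨h1, h2, h3, h4⟩ := ih
    refine ⟨CS.tonly b1 d2 (g2.mono hτ (by norm_num)),
      fun j => CS.tonly (b2 j) (d4 j) ((g4 j).mono hτ (by norm_num)), ?_, fun f ν hν hf => ?_⟩
    · refine CS.tonly (f' := fun t => (-vr t) * ((rS t)⁻¹ * (rS t)⁻¹)) b3 (fun t ht => ?_) ?_
      · have h0 : rS t ≠ 0 := by linarith [hr t ht]
        refine ((d1 t ht).fun_inv h0).congr_deriv ?_
        field_simp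
      · exact (g1.neg hτ).mul hτ (h3.mul hτ h3 le_rfl) (by norm_num)
    · refine CS.tonly (f' := fun t => pderivR f (rS t) (θS t) * vr t +
        ∑ j, pderivTheta j f (rS t) (θS t) * vθ j t) (b4 f ν hν hf) (fun t ht => ?_) ?_
      · have hr' := hr t ht
        have hθ' := hKU (hθ t ht)
        have hv : HasDerivAt (fun s => (rS s, θS s)) (vr t, fun j => vθ j t) t :=
          (d1 t ht).prodMk (hasDerivAt_pi.2 fun j => d3 j t ht)
        have := HasFDerivAt.comp_hasDerivAt (f := fun s => (rS s, θS s)) t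
          (hf.1.hasF hU hr' hθ') hv
        refine this.congr_deriv ?_
        rw [hf.1.R_eq hU hr' hθ']
        simp only [hf.1.T_eq hU _ hr' hθ']
        set L := fderiv ℝ (fun z : ℝ × (Fin m → ℝ) => f z.1 z.2) (rS t, θS t)
        have e1 : ((vr t, fun j => vθ j t) : ℝ × (Fin m → ℝ)) =
            vr t • (1, 0) + ContinuousLinearMap.inr ℝ ℝ (Fin m → ℝ) (fun j => vθ j t) := by
          ext <;> simp
        rw [e1, map_add, map_smul]
        have e2 := clm_pi_apply (L.comp (ContinuousLinearMap.inr ℝ ℝ (Fin m → ℝ)))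
          (fun j => vθ j t)
        rw [ContinuousLinearMap.comp_apply] at e2
        rw [e2]
        simp [mul_comm]
      · refine Sym.add ?_ (Sym.sum _ fun j _ => ?_)
        · exact (h4 _ (ν + 1) (by linarith) (hf.R hU hKU)).mul hτ g1 (by linarith)
        · exact (h4 _ ν hν (hf.T hU j)).mul hτ (g3 j) (by linarith)

end Traj

section Final

variable {m : ℕ} {T₀ : ℝ}

theorem CS.factor (hT : T₀ ≤ -1) {n : ℕ} {κ : ℝ} (X : ST m → Fin n → ℝ) (u : Dir m → Fin n → ℝ)
    (hX : ∀ z (s : ℝ) d i, X (z + s • eV m d) i = X z i + s * u d i)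
    (hu : ∀ d i, u d i = 0 ∨ κ ≤ - wV m d)
    (hut : ∀ i, u .t i = 0)
    (xS : ℝ → Fin n → ℝ) (vx : Fin n → ℝ → ℝ) (D D' : ℝ → ℝ)
    (hD0 : ∀ t ≤ 0, D t ≠ 0) (hxd : ∀ i, ∀ t ≤ 0, HasDerivAt (fun s => xS s i) (vx i t) t)
    (hDd : ∀ t ≤ 0, HasDerivAt D (D' t) t)
    (hvx : ∀ N i, CS m T₀ N (-1 - κ) (fun z => vx i z.1))
    (hDi : ∀ N, CS m T₀ N κ (fun z => (D z.1)⁻¹))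
    (hDD : ∀ N, CS m T₀ N (-1) (fun z => D' z.1 * (D z.1)⁻¹))
    (Ψ : (Fin n → ℝ) → ℝ) (hΨ : ContDiff ℝ (⊤ : ℕ∞) Ψ) (hc : HasCompactSupport Ψ) (N : ℕ) :
    CS m T₀ N 0 (fun z => Ψ (fun i => (X z i - xS z.1 i) / D z.1)) := by
  have hτ := tau_ge (m := m) hT
  refine Sym.comp hτ (fun z i => (X z i - xS z.1 i) / D z.1) (fun d => ?_) N Ψ hΨ hc
  have other : d ≠ .t → (eV m d).1 = 0 := by cases d <;> simp [eV]
  by_cases hd : d = .t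
  · subst hd
    refine ⟨fun i z => - vx i z.1 * (D z.1)⁻¹, fun z => - (D' z.1 * (D z.1)⁻¹),
      fun N i => ?_, fun N => (hDD N).neg hτ, fun z hz i => ?_⟩
    · exact ((hvx N i).neg hτ).mul hτ (hDi N) (by simp [wV])
    · have hz' : z.1 ≤ 0 := hz
      have h0 : HasDerivAt (fun s : ℝ => z.1 + s) 1 0 := (hasDerivAt_id' (0:ℝ)).const_add _
      have h1 : HasDerivAt (fun s : ℝ => xS (z.1 + s) i) (vx i z.1) 0 := by
        have : HasDerivAt (fun s => xS s i) (vx i z.1) (z.1 + 0) := by simpa using hxd i _ hz'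
        exact this.comp_const_add z.1 0
      have h2 : HasDerivAt (fun s : ℝ => D (z.1 + s)) (D' z.1) 0 := by
        have : HasDerivAt D (D' z.1) (z.1 + 0) := by simpa using hDd _ hz'
        exact this.comp_const_add z.1 0
      have hne := hD0 _ hz'
      have h3 := (h1.const_sub (X z i)).fun_div h2 (by simpa using hne)
      have e : (fun s : ℝ => (X (z + s • eV m .t) i - xS (z + s • eV m .t).1 i) /
          D (z + s • eV m .t).1) = fun s => (X z i - xS (z.1 + s) i) / D (z.1 + s) := by
        ext s
        rw [hX, hut]
        simp [eV]
      rw [e]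
      refine h3.congr_deriv ?_
      simp only [add_zero]
      field_simp
      ring
  · have h1 := other hd
    refine ⟨fun i z => u d i * (D z.1)⁻¹, fun z => 0, fun N i => ?_, fun N => Sym.zero,
      fun z hz i => ?_⟩
    · rcases hu d i with h | h
      · simp only [h, zero_mul]; exact Sym.zero
      · exact (Sym.const _).mul hτ (hDi N) (by linarith)
    · have e : (fun s : ℝ => (X (z + s • eV m d) i - xS (z + s • eV m d).1 i) /
          D (z + s • eV m d).1) = fun s => (X z i + s * u d i - xS z.1 i) / D z.1 := by
        ext s
        rw [hX]
        simp [h1]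
      rw [e]
      refine (((((hasDerivAt_id' (0:ℝ)).mul_const (u d i)).const_add (X z i)).sub_const
        (xS z.1 i)).div_const (D z.1)).congr_deriv ?_
      rw [div_eq_mul_inv]; ring

/-- `g` is, for nonpositive times, pointwise equal to a symbol or zero. -/
def J (T₀ : ℝ) (ν : ℝ) (g : F5 m) : Prop :=
  ∀ N, ∃ G : ST m → ℝ, CS m T₀ N ν G ∧
    ∀ t ≤ 0, ∀ r θ ρ ω, g t r θ ρ ω = G (t, r, θ, ρ, ω) ∨ g t r θ ρ ω = 0

variable {ν : ℝ} {g : F5 m}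

theorem J.dt (h : J T₀ ν g) : J T₀ (ν - 1) (DT g) := by
  intro N
  obtain ⟨G, hG, hg⟩ := h (N + 1)
  obtain ⟨G', h1, h2⟩ := hG.2 .t
  refine ⟨G', h2, fun t ht r θ ρ ω => ?_⟩
  refine junk_deriv (G := fun s => G (s, r, θ, ρ, ω))
    (fun s hs => hg s (hs.trans ht) r θ ρ ω) ?_
  have h3 := h1 (t, r, θ, ρ, ω) ht
  rw [← sub_self t] at h3
  simpa [eV] using h3.comp_sub_const t t

theorem J.dr (h : J T₀ ν g) : J T₀ (ν - 1) (DR g) := by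
  intro N
  obtain ⟨G, hG, hg⟩ := h (N + 1)
  obtain ⟨G', h1, h2⟩ := hG.2 .r
  refine ⟨G', h2, fun t ht r θ ρ ω => ?_⟩
  refine junk_deriv (G := fun s => G (t, s, θ, ρ, ω)) (fun s hs => hg t ht s θ ρ ω) ?_
  have h3 := h1 (t, r, θ, ρ, ω) ht
  rw [← sub_self r] at h3
  simpa [eV] using h3.comp_sub_const r r

theorem J.drho (h : J T₀ ν g) : J T₀ ν (DRho g) := by
  intro N
  obtain ⟨G, hG, hg⟩ := h (N + 1)
  obtain ⟨G', h1, h2⟩ := hG.2 .rh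
  refine ⟨G', by have h : CS m T₀ N (ν - 0) G' := h2; rwa [sub_zero] at h, fun t ht r θ ρ ω => ?_⟩
  refine junk_deriv (G := fun s => G (t, r, θ, s, ω)) (fun s hs => hg t ht r θ s ω) ?_
  have h3 := h1 (t, r, θ, ρ, ω) ht
  rw [← sub_self ρ] at h3
  simpa [eV] using h3.comp_sub_const ρ ρ

theorem J.dtheta (h : J T₀ ν g) (j : Fin m) : J T₀ ν (DTheta j g) := by
  intro N
  obtain ⟨G, hG, hg⟩ := h (N + 1)
  obtain ⟨G', h1, h2⟩ := hG.2 (.th j)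
  refine ⟨G', by have h : CS m T₀ N (ν - 0) G' := h2; rwa [sub_zero] at h, fun t ht r θ ρ ω => ?_⟩
  refine junk_fderiv (G := fun y => G (t, r, y, ρ, ω)) (fun y => hg t ht r y ρ ω) ?_
  simpa [eV] using h1 (t, r, θ, ρ, ω) ht

theorem J.domega (h : J T₀ ν g) (j : Fin m) : J T₀ ν (DOmega j g) := by
  intro N
  obtain ⟨G, hG, hg⟩ := h (N + 1)
  obtain ⟨G', h1, h2⟩ := hG.2 (.om j)
  refine ⟨G', by have h : CS m T₀ N (ν - 0) G' := h2; rwa [sub_zero] at h, fun t ht r θ ρ ω => ?_⟩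
  refine junk_fderiv (G := fun y => G (t, r, θ, ρ, y)) (fun y => hg t ht r θ ρ y) ?_
  simpa [eV] using h1 (t, r, θ, ρ, ω) ht

theorem J.mixed (h : J T₀ 0 g) (k l n' : ℕ) (α β : List (Fin m)) :
    J T₀ (-(n':ℝ) - k) (mixedDeriv k α l β n' g) := by
  unfold mixedDeriv
  have h1 : J T₀ (-(n':ℝ)) ((DT (m := m))^[n'] g) := by
    induction n' with
    | zero => simpa using h
    | succ n ih =>
      rw [Function.iterate_succ_apply']
      convert ih.dt using 1
      push_cast; ring
  have h2 : J T₀ (-(n':ℝ)) (β.foldr DOmega ((DT (m := m))^[n'] g)) := by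
    induction β with
    | nil => exact h1
    | cons j β ih => exact ih.domega j
  generalize (β.foldr DOmega ((DT (m := m))^[n'] g)) = g2 at h2
  have h3 : J T₀ (-(n':ℝ)) ((DRho (m := m))^[l] g2) := by
    induction l with
    | zero => exact h2
    | succ n ih => rw [Function.iterate_succ_apply']; exact ih.drho
  have h4 : J T₀ (-(n':ℝ)) (α.foldr DTheta ((DRho (m := m))^[l] g2)) := by
    induction α with
    | nil => exact h3
    | cons j α ih => exact ih.dtheta j
  induction k with
  | zero => simpa using h4
  | succ k ih =>
    rw [Function.iterate_succ_apply']
    convert ih.dr using 1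
    push_cast; ring

theorem eNorm_div {n : ℕ} (v : Fin n → ℝ) {d : ℝ} (hd : 0 < d) :
    eNorm (fun i => v i / d) = eNorm v / d := by
  unfold eNorm
  simp only [div_pow]
  rw [← Finset.sum_div, Real.sqrt_div (Finset.sum_nonneg fun i _ => sq_nonneg _),
    Real.sqrt_sq hd.le]

theorem eNorm_one (x : ℝ) : eNorm (fun _ : Fin 1 => x) = |x| := by
  simp [eNorm, Real.sqrt_sq_eq_abs]

end Final

/-- Lemma 3.5, part 3: symbol estimates for the escape function:
`|∂_r^k ∂_θ^α ∂_ρ^l ∂_ω^β ∂_t^n φ| ≤ C_{kαlβn} ⟨t⟩^{-n-k}`. -/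
theorem statement_16 {m : ℕ} (hm : 1 ≤ m) {μ : ℝ} (hμ : μ ∈ Ioo (0:ℝ) 1)
    {U : Set (Fin m → ℝ)} (hU : IsOpen U) (c : Coeffs m μ U)
    (χ : ℝ → ℝ) (hχs : ContDiff ℝ (⊤ : ℕ∞) χ)
    (hχ1 : ∀ τ ≤ (1:ℝ), χ τ = 1) (hχ0 : ∀ τ ≥ (2:ℝ), χ τ = 0)
    (hχrange : ∀ τ, χ τ ∈ Icc (0:ℝ) 1) (hχmono : ∀ τ ≥ (0:ℝ), deriv χ τ ≤ 0)
    (K : Set (Fin m → ℝ)) (hK : IsCompact K) (hKU : K ⊆ U)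
    (c₀ C₀ : ℝ) (hc₀ : 0 < c₀) (hC₀ : 0 < C₀) :
    ∃ δ' > (0:ℝ), ∀ δ₀ ∈ Ioo (δ'/2) δ', ∃ C₁ > (0:ℝ), ∀ C ≥ C₁, ∃ T₁ < (0:ℝ),
      ∀ T₀ ≤ T₁,
      ∀ (rS : ℝ → ℝ) (θS : ℝ → Fin m → ℝ) (ρS : ℝ → ℝ) (ωS : ℝ → Fin m → ℝ),
        IsHamSolOn c.p rS θS ρS ωS (Iic 0) →
        (∀ t ≤ (0:ℝ), rS t ∈ Ioi (1:ℝ) ∧ θS t ∈ K ∧ |ρS t| ≤ C₀ ∧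
          eNorm (ωS t) ≤ C₀ ∧ rS t ≥ c₀ * |t + T₀|) →
        ∀ (k l n' : ℕ) (α β : List (Fin m)), ∃ Cb > (0:ℝ),
          ∀ t ≤ (0:ℝ), ∀ r ∈ Ioi (1:ℝ), ∀ θ ∈ U, ∀ (ρ : ℝ) (ω : Fin m → ℝ),
            |mixedDeriv k α l β n' (escapeFn μ χ δ₀ C T₀ rS θS ρS ωS) t r θ ρ ω|
              ≤ Cb * (1 + |t|) ^ (-(n' : ℝ) - (k : ℝ)) := by
  refine ⟨1, one_pos, fun δ₀ hδ => ⟨1, one_pos, fun C hC => ?_⟩⟩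
  have hδ0 : 0 < δ₀ := by linarith [hδ.1]
  have hC0 : 0 < C := by linarith
  have hlim : Tendsto (fun x : ℝ => C * x ^ (-μ)) atTop (𝓝 (C * 0)) :=
    (tendsto_rpow_neg_atTop hμ.1).const_mul C
  rw [mul_zero] at hlim
  obtain ⟨X, hX⟩ := eventually_atTop.1 (hlim.eventually (Iio_mem_nhds (half_pos hδ0)))
  refine ⟨-max X 1, by simp, fun T₀ hT₀ rS θS ρS ωS hsol hcond k l n' α β => ?_⟩
  have hT : T₀ ≤ -1 := hT₀.trans (neg_le_neg (le_max_right _ _))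
  have hTX : T₀ ≤ -X := hT₀.trans (neg_le_neg (le_max_left _ _))
  have habs : ∀ t ≤ (0:ℝ), |t + T₀| = -(t + T₀) := fun t ht => abs_of_nonpos (by linarith)
  have hτ := tau_ge (m := m) hT
  have w1 : ∀ t ≤ (0:ℝ), δ₀ / 2 ≤ δ₀ - C * (-(t + T₀)) ^ (-μ) := fun t ht => by
    have : C * (-(t + T₀)) ^ (-μ) < δ₀ / 2 := hX (-(t + T₀)) (by linarith)
    linarith
  have w2 : ∀ t ≤ (0:ℝ), δ₀ / 2 ≤ δ₀ - C * (-(t + T₀)) ^ (-(1:ℝ) - μ) := fun t ht => by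
    have h1 := w1 t ht
    have h2 : (-(t + T₀)) ^ (-(1:ℝ) - μ) ≤ (-(t + T₀)) ^ (-μ) :=
      Real.rpow_le_rpow_of_exponent_le (by linarith) (by linarith)
    have := mul_le_mul_of_nonneg_left h2 hC0.le
    linarith
  obtain ⟨vr, vρ, vθ, vω, d1, d2, d3, d4, hv⟩ := traj (T₀ := T₀) (C₀ := C₀) c hμ.1 hU hK hKU hT hc₀
    hsol (fun t ht => (hcond t ht).1) (fun t ht => (hcond t ht).2.1)
    (fun t ht => (hcond t ht).2.2.1) (fun t ht => (hcond t ht).2.2.2.1)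
    (fun t ht => by rw [← habs t ht]; exact (hcond t ht).2.2.2.2)
  have hJ : J T₀ 0 (escapeFn μ χ δ₀ C T₀ rS θS ρS ωS) := by
    intro N
    have wd : ∀ b : ℝ, ∀ t ≤ (0:ℝ), HasDerivAt (fun t => δ₀ - C * (-(t + T₀)) ^ b)
        ((C * b) * (-(t + T₀)) ^ (b - 1)) t := fun b t ht =>
      (((tau_deriv hT b ht).const_mul C).const_sub δ₀).congr_deriv (by ring)
    have wdd : ∀ b : ℝ, b ≤ 0 → (∀ t ≤ (0:ℝ), δ₀ / 2 ≤ δ₀ - C * (-(t + T₀)) ^ b) → ∀ N,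
        CS m T₀ N (-1) (fun z => ((C * b) * (-(z.1 + T₀)) ^ (b - 1)) *
          (δ₀ - C * (-(z.1 + T₀)) ^ b)⁻¹) := fun b hb hw N =>
      ((Sym.const (C * b)).mul hτ (CS.tau hT N (b - 1)) (c := -1) (by linarith)).mul hτ
        (CS.width hT hδ0 hb hw N) (by norm_num)
    have F1 := CS.factor (m := m) (n := 1) (κ := -1) hT (fun z _ => z.2.1)
      (fun d _ => (eV m d).2.1) (fun z s d i => by simp)
      (fun d i => by cases d <;> simp [eV, wV]) (fun i => by simp [eV])
      (fun t _ => rS t) (fun _ => vr) (fun t => 5 * δ₀ * (-(t + T₀))) (fun _ => -(5 * δ₀))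
      (fun t ht => by have : 0 < -(t + T₀) := by linarith
                      positivity)
      (fun _ => d1)
      (fun t ht => ((((hasDerivAt_id' t).add_const T₀).neg).const_mul (5 * δ₀)).congr_deriv
        (by ring))
      (fun N _ => by simpa using (hv N).1)
      (fun N => by
        have := (Sym.const (5 * δ₀)⁻¹).mul hτ (CS.tau hT N (-1)) (c := -1) (by norm_num)
        simp only [Real.rpow_neg_one, mul_inv] at this ⊢
        exact this)
      (fun N => by
        have := (Sym.const (-1)).mul hτ (CS.tau hT N (-1)) (c := -1) (by norm_num)
        have e : (fun z : ST m => -(5 * δ₀) * (5 * δ₀ * (-(z.1 + T₀)))⁻¹) =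
            fun z => (-1) * (-(z.1 + T₀)) ^ (-1:ℝ) := by
          ext z
          rw [Real.rpow_neg_one, mul_inv]
          field_simp
        rw [e]; exact this)
      (fun v => χ (eNorm v)) (cutoff_smooth 1 χ hχs hχ1) (cutoff_compact 1 χ hχ0) N
    have F2 := CS.factor (m := m) (n := m) (κ := 0) hT (fun z i => z.2.2.1 i)
      (fun d i => (eV m d).2.2.1 i) (fun z s d i => by simp)
      (fun d i => by cases d <;> simp [eV, wV]) (fun i => by simp [eV])
      θS vθ (fun t => δ₀ - C * (-(t + T₀)) ^ (-μ)) _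
      (fun t ht => by linarith [w1 t ht]) d3 (wd (-μ))
      (fun N i => by simpa using (hv N).2.2.1 i)
      (CS.width hT hδ0 (by linarith [hμ.1]) w1) (wdd _ (by linarith [hμ.1]) w1)
      (fun v => χ (eNorm v)) (cutoff_smooth m χ hχs hχ1) (cutoff_compact m χ hχ0) N
    have F3 := CS.factor (m := m) (n := 1) (κ := 0) hT (fun z _ => z.2.2.2.1)
      (fun d _ => (eV m d).2.2.2.1) (fun z s d i => by simp)
      (fun d i => by cases d <;> simp [eV, wV]) (fun i => by simp [eV])
      (fun t _ => ρS t) (fun _ => vρ) (fun t => δ₀ - C * (-(t + T₀)) ^ (-(1:ℝ) - μ)) _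
      (fun t ht => by linarith [w2 t ht]) (fun _ => d2) (wd (-(1:ℝ) - μ))
      (fun N i => by simpa using (hv N).2.1)
      (CS.width hT hδ0 (by linarith [hμ.1]) w2) (wdd _ (by linarith [hμ.1]) w2)
      (fun v => χ (eNorm v)) (cutoff_smooth 1 χ hχs hχ1) (cutoff_compact 1 χ hχ0) N
    have F4 := CS.factor (m := m) (n := m) (κ := 0) hT (fun z i => z.2.2.2.2 i)
      (fun d i => (eV m d).2.2.2.2 i) (fun z s d i => by simp)
      (fun d i => by cases d <;> simp [eV, wV]) (fun i => by simp [eV])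
      ωS vω (fun t => δ₀ - C * (-(t + T₀)) ^ (-μ)) _
      (fun t ht => by linarith [w1 t ht]) d4 (wd (-μ))
      (fun N i => by simpa using (hv N).2.2.2 i)
      (CS.width hT hδ0 (by linarith [hμ.1]) w1) (wdd _ (by linarith [hμ.1]) w1)
      (fun v => χ (eNorm v)) (cutoff_smooth m χ hχs hχ1) (cutoff_compact m χ hχ0) N
    refine ⟨_, ((F1.mul hτ F2 (c := 0) (by norm_num)).mul hτ F3 (c := 0) (by norm_num)).mul hτ F4
      (by norm_num), fun t ht r θ ρ ω => Or.inl ?_⟩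
    have p0 : 0 < 5 * δ₀ * (-(t + T₀)) := mul_pos (by positivity) (by linarith)
    have p1 : 0 < δ₀ - C * (-(t + T₀)) ^ (-μ) := by linarith [w1 t ht]
    have p2 : 0 < δ₀ - C * (-(t + T₀)) ^ (-(1:ℝ) - μ) := by linarith [w2 t ht]
    have q1 := eNorm_div (θ - θS t) p1
    have q2 := eNorm_div (ω - ωS t) p1
    simp only [Pi.sub_apply] at q1 q2
    simp only [escapeFn, habs t ht, eNorm_one, q1, q2, abs_div, abs_of_pos p0, abs_of_pos p2]
  obtain ⟨G, hG, hg⟩ := hJ.mixed k l n' α β 0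
  obtain ⟨B, hB⟩ := hG
  refine ⟨|B| + 1, by positivity, fun t ht r hr θ hθ ρ ω => ?_⟩
  have hpos : 0 ≤ (1 + |t|) ^ (-(n':ℝ) - (k:ℝ)) := Real.rpow_nonneg (by positivity) _
  rcases hg t ht r θ ρ ω with h | h
  · rw [h]
    have h1 := hB (t, r, θ, ρ, ω) ht
    have h2 : (-(t + T₀)) ^ (-(n':ℝ) - (k:ℝ)) ≤ (1 + |t|) ^ (-(n':ℝ) - (k:ℝ)) := by
      refine Real.rpow_le_rpow_of_nonpos (by positivity) ?_ ?_
      · rw [abs_of_nonpos ht]; linarith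
      · have : (0:ℝ) ≤ n' := Nat.cast_nonneg _
        have : (0:ℝ) ≤ k := Nat.cast_nonneg _
        linarith
    have h3 : 0 ≤ (-(t + T₀)) ^ (-(n':ℝ) - (k:ℝ)) := Real.rpow_nonneg (by linarith) _
    calc _ ≤ B * (-(t + T₀)) ^ (-(n':ℝ) - (k:ℝ)) := h1
      _ ≤ (|B| + 1) * (-(t + T₀)) ^ (-(n':ℝ) - (k:ℝ)) :=
          mul_le_mul_of_nonneg_right (by linarith [le_abs_self B]) h3
      _ ≤ _ := mul_le_mul_of_nonneg_left h2 (by positivity)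
  · rw [h, abs_zero]; positivity

end Scattering
end

section
/- (Symbol estimate for the interaction Hamiltonian, estimate (10.10.8.15).) Let K ⊆ U be compact, and let c, C₁ > 0 with c < C₁. Then there exist c' > 0 and, for every j ∈ ℕ, a constant C_j such that for all h ∈ (0,1], t' ≥ 0, and all (r,θ,ρ,ω) with 1 < r ≤ C₁, θ ∈ K, −C₁ ≤ ρ ≤ −c, and |ω| ≤ C₁, setting r̃ := r − 2h^{-1}t'ρ one has r̃ ≥ max(r, 2c h^{-1}t') ≥ c'(1 + h^{-1}t'), and |∂_r^j [ h^{-2}ρ² − p(r − 2h^{-1}t'ρ, θ, h^{-1}ρ, h^{-1}ω) ]| ≤ C_j h^{-2} (1 + h^{-1}t')^{-1-μ-j}. -/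
open Real Set Filter Topology

namespace Scattering

/-- A uniform family of symbols of order `-ν` on `(1,∞)`. -/
def IsSym {ι : Type} (f : ι → ℝ → ℝ) (ν : ℝ) : Prop :=
  (∀ i, ∀ x : ℝ, 1 < x → ContDiffAt ℝ (⊤ : ℕ∞) (f i) x) ∧
  ∀ k : ℕ, ∃ C : ℝ, 0 ≤ C ∧ ∀ i, ∀ x : ℝ, 1 < x →
    |iteratedDeriv k (f i) x| ≤ C * x ^ (-ν - (k : ℝ))

theorem IsSym.mono {ι : Type} {f : ι → ℝ → ℝ} {ν ν' : ℝ} (hf : IsSym f ν) (h : ν' ≤ ν) :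
    IsSym f ν' := by
  refine ⟨hf.1, fun k => ?_⟩
  obtain ⟨C, hC, H⟩ := hf.2 k
  refine ⟨C, hC, fun i x hx => (H i x hx).trans ?_⟩
  exact mul_le_mul_of_nonneg_left (Real.rpow_le_rpow_of_exponent_le hx.le (by linarith)) hC

theorem IsSym.add {ι : Type} {f g : ι → ℝ → ℝ} {ν : ℝ} (hf : IsSym f ν) (hg : IsSym g ν) :
    IsSym (fun i x => f i x + g i x) ν := by
  refine ⟨fun i x hx => (hf.1 i x hx).add (hg.1 i x hx), fun k => ?_⟩
  obtain ⟨C, hC, H⟩ := hf.2 k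
  obtain ⟨D, hD, G⟩ := hg.2 k
  refine ⟨C + D, by positivity, fun i x hx => ?_⟩
  have e : iteratedDeriv k (fun x => f i x + g i x) x
      = iteratedDeriv k (f i) x + iteratedDeriv k (g i) x :=
    iteratedDeriv_add ((hf.1 i x hx).of_le (by exact_mod_cast le_top))
      ((hg.1 i x hx).of_le (by exact_mod_cast le_top))
  rw [e, add_mul]
  exact (abs_add_le _ _).trans (add_le_add (H i x hx) (G i x hx))

theorem IsSym.mul {ι : Type} {f g : ι → ℝ → ℝ} {ν ν' : ℝ} (hf : IsSym f ν) (hg : IsSym g ν') :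
    IsSym (fun i x => f i x * g i x) (ν + ν') := by
  refine ⟨fun i x hx => (hf.1 i x hx).mul (hg.1 i x hx), fun k => ?_⟩
  choose C hC H using hf.2
  choose D hD G using hg.2
  refine ⟨∑ i ∈ Finset.range (k + 1), (k.choose i : ℝ) * C i * D (k - i),
    Finset.sum_nonneg fun i _ => by have := hC i; have := hD (k - i); positivity,
    fun i x hx => ?_⟩
  have e : iteratedDeriv k (fun x => f i x * g i x) x
      = ∑ l ∈ Finset.range (k + 1),
        (k.choose l : ℝ) * iteratedDeriv l (f i) x * iteratedDeriv (k - l) (g i) x :=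
    iteratedDeriv_mul ((hf.1 i x hx).of_le (by exact_mod_cast le_top))
      ((hg.1 i x hx).of_le (by exact_mod_cast le_top))
  rw [e, Finset.sum_mul]
  refine (Finset.abs_sum_le_sum_abs _ _).trans (Finset.sum_le_sum fun l hl => ?_)
  have hl' : l ≤ k := by simpa [Nat.lt_succ_iff] using hl
  have x0 : 0 < x := by linarith
  rw [abs_mul, abs_mul, Nat.abs_cast]
  have e2 : x ^ (-(ν + ν') - (k : ℝ))
      = x ^ (-ν - (l : ℝ)) * x ^ (-ν' - ((k - l : ℕ) : ℝ)) := by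
    rw [← Real.rpow_add x0, Nat.cast_sub hl']
    congr 1; ring
  rw [e2]
  have h1 := H l i x hx
  have h2 := G (k - l) i x hx
  calc _ ≤ (k.choose l : ℝ) * (C l * x ^ (-ν - (l : ℝ)))
        * (D (k - l) * x ^ (-ν' - ((k - l : ℕ) : ℝ))) := by
        have := hC l
        gcongr
    _ = _ := by ring

theorem IsSym.const {ι : Type} (b : ι → ℝ) (B : ℝ) (hb : ∀ i, |b i| ≤ B) :
    IsSym (fun i _ => b i) 0 := by
  refine ⟨fun i x _ => contDiffAt_const, fun k => ⟨|B|, abs_nonneg _, fun i x hx => ?_⟩⟩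
  rw [iteratedDeriv_const]
  split_ifs with h
  · subst h
    simpa using (hb i).trans (le_abs_self B)
  · simp only [abs_zero]
    have : 0 < x := by linarith
    positivity

theorem IsSym.sum {ι κ : Type} (s : Finset κ) {f : κ → ι → ℝ → ℝ} {ν : ℝ} (hν : ∀ j ∈ s, IsSym (f j) ν) :
    IsSym (fun i x => ∑ j ∈ s, f j i x) ν := by
  classical
  induction s using Finset.induction_on with
  | empty =>
    refine ⟨fun i x _ => by simpa using contDiffAt_const, fun k => ⟨0, le_rfl, fun i x hx => ?_⟩⟩
    simp [iteratedDeriv_const]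
  | insert a s ha ih =>
    simp only [Finset.sum_insert ha]
    exact (hν a (Finset.mem_insert_self _ _)).add
      (ih fun j hj => hν j (Finset.mem_insert_of_mem hj))

theorem IsSym.inv (ι : Type) : IsSym (fun (_ : ι) (x : ℝ) => x⁻¹) 1 := by
  refine ⟨fun i x hx => contDiffAt_inv ℝ (by linarith), fun k => ⟨(k.factorial : ℝ), by positivity,
    fun i x hx => ?_⟩⟩
  have x0 : 0 < x := by linarith
  have e : iteratedDeriv k (fun x : ℝ => x⁻¹) x
      = (-1) ^ k * k.factorial * x ^ (-1 - k : ℤ) := by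
    rw [iteratedDeriv_eq_iterate]; exact iter_deriv_inv k x
  rw [e, abs_mul, abs_mul, abs_pow, abs_neg, abs_one, one_pow, one_mul, Nat.abs_cast,
    abs_of_pos (by positivity), ← Real.rpow_intCast]
  push_cast
  exact le_rfl

theorem pderivR_iter {m : ℕ} (k : ℕ) (f : ℝ → (Fin m → ℝ) → ℝ) (r : ℝ) (θ : Fin m → ℝ) :
    (pderivR (m := m))^[k] f r θ = iteratedDeriv k (fun s => f s θ) r := by
  rw [iteratedDeriv_eq_iterate]
  induction k generalizing f with
  | zero => rfl
  | succ k ih => rw [Function.iterate_succ_apply, Function.iterate_succ_apply, ih]; rfl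

theorem IsSym.ofDecay {m : ℕ} {f : ℝ → (Fin m → ℝ) → ℝ} {ν : ℝ} {U K : Set (Fin m → ℝ)}
    (hU : IsOpen U) (hKU : K ⊆ U)
    (hs : ContDiffOn ℝ (⊤ : ℕ∞) (fun z : ℝ × (Fin m → ℝ) => f z.1 z.2) (Ioi (1:ℝ) ×ˢ U))
    (hd : DecayOn f ν 1 K) {ι : Type} (θ : ι → Fin m → ℝ) (hθ : ∀ i, θ i ∈ K) :
    IsSym (fun i x => f x (θ i)) ν := by
  refine ⟨fun i x hx => ?_, fun k => ?_⟩
  · have h1 := hs.contDiffAt (x := (x, θ i))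
      ((isOpen_Ioi.prod hU).mem_nhds ⟨hx, hKU (hθ i)⟩)
    exact h1.comp (f := fun y : ℝ => (y, θ i)) x (contDiffAt_id.prodMk contDiffAt_const)
  · obtain ⟨C, hC, H⟩ := hd k []
    refine ⟨C, hC.le, fun i x hx => ?_⟩
    have := H x hx (θ i) (hθ i)
    rwa [pderivR_iter] at this

theorem abs_le_eNorm {m : ℕ} (v : Fin m → ℝ) (j : Fin m) : |v j| ≤ eNorm v := by
  rw [eNorm, ← Real.sqrt_sq_eq_abs]
  exact Real.sqrt_le_sqrt (Finset.single_le_sum (f := fun j => v j ^ 2)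
    (fun i _ => sq_nonneg _) (Finset.mem_univ j))

/-- The interaction remainder. -/
noncomputable def remn {m : ℕ} {μ : ℝ} {U : Set (Fin m → ℝ)} (c : Coeffs m μ U)
    (θ : Fin m → ℝ) (ρ : ℝ) (ω : Fin m → ℝ) (x : ℝ) : ℝ :=
  (∑ j, ∑ k, (c.hM θ j k * ω j * ω k) * (x⁻¹ * x⁻¹)) + c.a0 x θ * (ρ ^ 2)
      + (∑ j, (c.a1 x θ j * (ρ * ω j)) * x⁻¹)
      + (∑ j, ∑ k, (c.a2 x θ j k * (ω j * ω k)) * (x⁻¹ * x⁻¹))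

theorem remn_eq {m : ℕ} {μ : ℝ} {U : Set (Fin m → ℝ)} (c : Coeffs m μ U)
    (θ : Fin m → ℝ) (ρ : ℝ) (ω : Fin m → ℝ) (x h : ℝ) :
    (h ^ 2)⁻¹ * ρ ^ 2 - c.p x θ (h⁻¹ * ρ) (h⁻¹ • ω) = (-(h ^ 2)⁻¹) * remn c θ ρ ω x := by
  simp only [Coeffs.p, energy, remn, div_eq_mul_inv, Finset.sum_mul, mul_add, Finset.mul_sum,
    Pi.smul_apply, smul_eq_mul, sub_eq_add_neg, neg_add, ← Finset.sum_neg_distrib]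
  have e1 : ∀ j k, -(c.hM θ j k * (h⁻¹ * ω j) * (h⁻¹ * ω k) * (x ^ 2)⁻¹)
      = -(h ^ 2)⁻¹ * (c.hM θ j k * ω j * ω k * (x⁻¹ * x⁻¹)) := fun j k => by ring
  have e2 : ∀ j, -(c.a1 x θ j * (h⁻¹ * ρ) * (h⁻¹ * ω j) * x⁻¹)
      = -(h ^ 2)⁻¹ * (c.a1 x θ j * (ρ * ω j) * x⁻¹) := fun j => by ring
  have e3 : ∀ j k, -(c.a2 x θ j k * (h⁻¹ * ω j) * (h⁻¹ * ω k) * (x ^ 2)⁻¹)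
      = -(h ^ 2)⁻¹ * (c.a2 x θ j k * (ω j * ω k) * (x⁻¹ * x⁻¹)) := fun j k => by ring
  simp only [e1, e2, e3]
  ring

theorem remn_sym {m : ℕ} {μ : ℝ} (hμ : μ ∈ Ioo (0:ℝ) 1)
    {U : Set (Fin m → ℝ)} (hU : IsOpen U) (c : Coeffs m μ U)
    (K : Set (Fin m → ℝ)) (hK : IsCompact K) (hKU : K ⊆ U) (C₁ : ℝ)
    {ι : Type} (θ : ι → Fin m → ℝ) (ρ : ι → ℝ) (ω : ι → Fin m → ℝ) (hθ : ∀ i, θ i ∈ K)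
    (hρ : ∀ i, |ρ i| ≤ C₁) (hω : ∀ i j, |ω i j| ≤ C₁) :
    IsSym (fun i x => remn c (θ i) (ρ i) (ω i) x) (1 + μ) := by
  obtain ⟨hμ0, hμ1⟩ := hμ
  have Sρ := IsSym.const ρ C₁ hρ
  have Sω := fun j => IsSym.const (fun i => ω i j) C₁ (fun i => hω i j)
  have I1 := IsSym.inv ι
  have I2 := I1.mul I1
  have Sh : ∀ j k, IsSym (fun i (_ : ℝ) => c.hM (θ i) j k) 0 := fun j k => by
    obtain ⟨B, hB⟩ := hK.exists_bound_of_continuousOn ((c.hM_smooth j k).continuousOn.mono hKU)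
    exact IsSym.const (fun i => c.hM (θ i) j k) B fun i => hB _ (hθ i)
  have S0 := IsSym.ofDecay hU hKU c.a0_smooth (c.a0_decay K hK hKU) θ hθ
  have S1 := fun j => IsSym.ofDecay hU hKU (c.a1_smooth j) (c.a1_decay K hK hKU j) θ hθ
  have S2 := fun j k => IsSym.ofDecay hU hKU (c.a2_smooth j k) (c.a2_decay K hK hKU j k) θ hθ
  refine ((IsSym.add ?_ ?_).add ?_).add ?_
  · exact IsSym.sum _ fun j _ => IsSym.sum _ fun k _ =>
      ((((Sh j k).mul (Sω j)).mul (Sω k)).mul I2).mono (by linarith)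
  · have := (S0.mul (Sρ.mul Sρ)).mono (ν' := 1 + μ) (by linarith)
    simpa only [sq] using this
  · exact IsSym.sum _ fun j _ =>
      (((S1 j).mul (Sρ.mul (Sω j))).mul I1).mono (by linarith)
  · exact IsSym.sum _ fun j _ => IsSym.sum _ fun k _ =>
      (((S2 j k).mul ((Sω j).mul (Sω k))).mul I2).mono (by linarith)

/-- Symbol estimate for the interaction Hamiltonian, estimate
(10.10.8.15): on the support region, with `r̃ = r - 2h⁻¹t'ρ ≥ c'(1 + h⁻¹t')`,
`|∂_r^j [h⁻²ρ² - p(r - 2h⁻¹t'ρ, θ, h⁻¹ρ, h⁻¹ω)]| ≤ C_j h⁻² (1 + h⁻¹t')^{-1-μ-j}`. -/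
theorem statement_18 {m : ℕ} (hm : 1 ≤ m) {μ : ℝ} (hμ : μ ∈ Ioo (0:ℝ) 1)
    {U : Set (Fin m → ℝ)} (hU : IsOpen U) (c : Coeffs m μ U)
    (K : Set (Fin m → ℝ)) (hK : IsCompact K) (hKU : K ⊆ U)
    (cl C₁ : ℝ) (hcl : 0 < cl) (hclC : cl < C₁) :
    ∃ c' > (0:ℝ), ∀ j : ℕ, ∃ Cj > (0:ℝ), ∀ h ∈ Ioc (0:ℝ) 1, ∀ t' ≥ (0:ℝ),
      ∀ (r : ℝ) (θ : Fin m → ℝ) (ρ : ℝ) (ω : Fin m → ℝ),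
        1 < r → r ≤ C₁ → θ ∈ K → -C₁ ≤ ρ → ρ ≤ -cl → eNorm ω ≤ C₁ →
        (r - 2 * h⁻¹ * t' * ρ ≥ max r (2 * cl * h⁻¹ * t') ∧
         max r (2 * cl * h⁻¹ * t') ≥ c' * (1 + h⁻¹ * t') ∧
         |deriv^[j]
            (fun x => (h ^ 2)⁻¹ * ρ ^ 2
              - c.p (x - 2 * h⁻¹ * t' * ρ) θ (h⁻¹ * ρ) (h⁻¹ • ω)) r|
           ≤ Cj * (h ^ 2)⁻¹ * (1 + h⁻¹ * t') ^ (-(1:ℝ) - μ - (j : ℝ))) := by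
  obtain ⟨c', hc', hc1, hc2⟩ : ∃ c' > (0:ℝ), 2 * c' ≤ 1 ∧ 2 * c' ≤ 2 * cl :=
    ⟨min 1 (2 * cl) / 2, by positivity, by linarith [min_le_left 1 (2 * cl)],
      by linarith [min_le_right 1 (2 * cl)]⟩
  refine ⟨c', hc', fun j => ?_⟩
  have S := remn_sym hμ hU c K hK hKU C₁
    (ι := {z : (Fin m → ℝ) × ℝ × (Fin m → ℝ) // z.1 ∈ K ∧ |z.2.1| ≤ C₁ ∧ ∀ j, |z.2.2 j| ≤ C₁})
    (fun z => z.1.1) (fun z => z.1.2.1) (fun z => z.1.2.2) (fun z => z.2.1) (fun z => z.2.2.1)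
    (fun z => z.2.2.2)
  obtain ⟨C, hC, H⟩ := S.2 j
  refine ⟨(C + 1) * c' ^ (-(1:ℝ) - μ - (j : ℝ)), by positivity, ?_⟩
  intro h hh t' ht r θ ρ ω hr hrC hθ hρ1 hρ2 hω
  have hT : 0 ≤ h⁻¹ * t' := mul_nonneg (inv_nonneg.2 hh.1.le) ht
  have g1 : r - 2 * h⁻¹ * t' * ρ ≥ max r (2 * cl * h⁻¹ * t') := by
    have : (h⁻¹ * t') * cl ≤ (h⁻¹ * t') * (-ρ) := mul_le_mul_of_nonneg_left (by linarith) hT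
    have h0 : 0 ≤ (h⁻¹ * t') * cl := by positivity
    apply max_le
    · linarith
    · linarith
  have g2 : max r (2 * cl * h⁻¹ * t') ≥ c' * (1 + h⁻¹ * t') := by
    have a1 := le_max_left r (2 * cl * h⁻¹ * t')
    have a2 := le_max_right r (2 * cl * h⁻¹ * t')
    have := mul_le_mul_of_nonneg_right hc2 hT
    linarith
  refine ⟨g1, g2, ?_⟩
  have hx : 1 < r - 2 * h⁻¹ * t' * ρ := lt_of_lt_of_le hr ((le_max_left _ _).trans g1)
  have hb := H ⟨(θ, ρ, ω), hθ, abs_le.2 ⟨hρ1, by linarith⟩,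
    fun j => (abs_le_eNorm ω j).trans hω⟩ _ hx
  simp only [] at hb
  simp only [remn_eq]
  rw [← iteratedDeriv_eq_iterate, iteratedDeriv_const_mul_field,
    iteratedDeriv_comp_sub_const j (remn c θ ρ ω) (2 * h⁻¹ * t' * ρ), abs_mul, abs_neg,
    abs_of_nonneg (by positivity)]
  have hj : (0:ℝ) ≤ j := Nat.cast_nonneg j
  have e : -(1 + μ) - (j : ℝ) = -(1:ℝ) - μ - (j : ℝ) := by ring
  rw [e] at hb
  have h1 : (r - 2 * h⁻¹ * t' * ρ) ^ (-(1:ℝ) - μ - (j : ℝ))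
      ≤ c' ^ (-(1:ℝ) - μ - (j : ℝ)) * (1 + h⁻¹ * t') ^ (-(1:ℝ) - μ - (j : ℝ)) := by
    rw [← Real.mul_rpow hc'.le (by positivity)]
    exact Real.rpow_le_rpow_of_nonpos (by positivity) (g2.le.trans g1.le) (by linarith [hμ.1])
  have hh2 : 0 ≤ (h ^ 2)⁻¹ := by positivity
  calc _ ≤ (h ^ 2)⁻¹ * ((C + 1) * (c' ^ (-(1:ℝ) - μ - (j : ℝ))
        * (1 + h⁻¹ * t') ^ (-(1:ℝ) - μ - (j : ℝ)))) := by
        refine mul_le_mul_of_nonneg_left (hb.trans ?_) hh2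
        refine (mul_le_mul_of_nonneg_left h1 hC).trans ?_
        exact mul_le_mul_of_nonneg_right (by linarith) (by positivity)
    _ = _ := by ring

end Scattering
end
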